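/- arXiv:math/0211189 — 5 statements merged into one kernel-verified Lean document; each statement's English description precedes it below -/
import Mathlib

section
/- For Lebesgue-almost every α ∈ ℝ the pair correlation of the sequence n²α modulo one is Poissonian: for all real numbers a < b, lim_{N→∞} (1/N) · #{ (j,k) : 1 ≤ j,k ≤ N, j ≠ k, and j²α − k²α ∈ [a/N, b/N] + ℤ } = b − a. -/
open MeasureTheory

noncomputable def pcF (p q x : ℝ) : ℝ := ((⌊q - x⌋ + ⌊x - p⌋ + 1 : ℤ) : ℝ)

lemma pcF_nonneg {p q : ℝ} (h : p ≤ q) (x : ℝ) : 0 ≤ pcF p q x := by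
  unfold pcF
  have h1 := Int.lt_floor_add_one (q - x)
  have h2 := Int.lt_floor_add_one (x - p)
  have : (-1 : ℤ) < ⌊q - x⌋ + ⌊x - p⌋ + 1 := by
    have : ((-1 : ℤ) : ℝ) < ((⌊q - x⌋ + ⌊x - p⌋ + 1 : ℤ) : ℝ) := by
      push_cast; linarith
    exact_mod_cast this
  have : (0 : ℤ) ≤ ⌊q - x⌋ + ⌊x - p⌋ + 1 := by omega
  exact_mod_cast this

lemma pcF_le (p q x : ℝ) : pcF p q x ≤ q - p + 1 := by
  unfold pcF
  have h1 := Int.floor_le (q - x)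
  have h2 := Int.floor_le (x - p)
  push_cast; linarith

lemma pcF_add_int (p q x : ℝ) (n : ℤ) : pcF p q (x + n) = pcF p q x := by
  unfold pcF
  rw [show q - (x + n) = q - x - n by ring, show x + n - p = x - p + n by ring,
    Int.floor_sub_intCast, Int.floor_add_intCast]
  push_cast; ring

lemma pcF_measurable (p q : ℝ) : Measurable (pcF p q) := by
  unfold pcF
  have : Measurable fun x : ℝ => ⌊q - x⌋ + ⌊x - p⌋ + 1 := by fun_prop
  exact (measurable_from_top (f := fun n : ℤ => (n : ℝ))).comp this

lemma sum_int_div (u : ℕ) (hu : 0 < u) (n : ℤ) :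
    ∑ s ∈ Finset.range u, (n + (s : ℤ)) / (u : ℤ) = n := by
  have step : ∀ n : ℤ, ∑ s ∈ Finset.range u, (n + 1 + (s : ℤ)) / (u : ℤ)
      = ∑ s ∈ Finset.range u, (n + (s : ℤ)) / (u : ℤ) + 1 := by
    intro n
    have h1 := Finset.sum_range_succ (fun s : ℕ => (n + (s : ℤ)) / (u : ℤ)) u
    have h2 := Finset.sum_range_succ' (fun s : ℕ => (n + (s : ℤ)) / (u : ℤ)) u
    have h3 : (n + (u : ℤ)) / (u : ℤ) = n / u + 1 := by
      rw [Int.add_ediv_of_dvd_right (dvd_refl _), Int.ediv_self (by omega)]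
    have h4 : ∀ s : ℕ, n + 1 + (s : ℤ) = n + ((s + 1 : ℕ) : ℤ) := by intro s; push_cast; ring
    simp only [h4]
    simp only [Nat.cast_zero, add_zero] at h2
    linarith
  induction n using Int.induction_on with
  | zero =>
    apply Finset.sum_eq_zero
    intro s hs
    have := Finset.mem_range.1 hs
    rw [zero_add]
    exact Int.ediv_eq_zero_of_lt (by omega) (by omega)
  | succ i ih => rw [step, ih]
  | pred i ih =>
    have := step (-(i : ℤ) - 1)
    rw [sub_add_cancel, ih] at this
    linarith

lemma hermite_floor (u : ℕ) (hu : 0 < u) (x : ℝ) :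
    ∑ s ∈ Finset.range u, ⌊x + (s : ℝ) / u⌋ = ⌊(u : ℝ) * x⌋ := by
  have hu' : (0 : ℝ) < u := by exact_mod_cast hu
  rw [← sum_int_div u hu ⌊(u : ℝ) * x⌋]
  refine Finset.sum_congr rfl fun s _ => ?_
  have : x + (s : ℝ) / u = ((u : ℝ) * x + ((s : ℤ) : ℝ)) / (u : ℝ) := by
    push_cast; field_simp
  rw [this, Int.floor_div_natCast, Int.floor_add_intCast]

lemma pcF_sum_le (p q y : ℝ) (u : ℕ) (hu : 0 < u) :
    ∑ s ∈ Finset.range u, pcF p q (y + (s : ℝ) / u) ≤ u * (q - p) + 1 := by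
  have hu' : (0 : ℝ) < u := by exact_mod_cast hu
  have h1 := hermite_floor u hu (y - p)
  have h2 := hermite_floor u hu (q - y - ((u : ℝ) - 1) / u)
  rw [← Finset.sum_range_reflect] at h2
  have h3 : ∀ s ∈ Finset.range u, ⌊q - y - ((u : ℝ) - 1) / u + ((u - 1 - s : ℕ) : ℝ) / u⌋
      = ⌊q - (y + (s : ℝ) / u)⌋ := by
    intro s hs
    have := Finset.mem_range.1 hs
    congr 1
    rw [Nat.cast_sub (by omega), Nat.cast_sub (by omega)]
    field_simp
    push_cast
    ring
  rw [Finset.sum_congr rfl h3] at h2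
  have h4 : (u : ℝ) * (q - y - ((u : ℝ) - 1) / u) = u * (q - y) - ((u - 1 : ℤ) : ℝ) := by
    push_cast; field_simp
  rw [h4, Int.floor_sub_intCast] at h2
  have h5 : ∀ s ∈ Finset.range u, ⌊y - p + (s : ℝ) / u⌋ = ⌊y + (s : ℝ) / u - p⌋ := by
    intro s _; congr 1; ring
  rw [Finset.sum_congr rfl h5] at h1
  unfold pcF
  rw [← Int.cast_sum, Finset.sum_add_distrib, Finset.sum_add_distrib, h1, h2]
  have a1 := Int.floor_le ((u : ℝ) * (q - y))
  have a2 := Int.floor_le ((u : ℝ) * (y - p))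
  simp only [Finset.sum_const, Finset.card_range, nsmul_eq_mul, mul_one]
  push_cast
  linarith

lemma integral_fract_period : ∫ x in (0 : ℝ)..1, Int.fract x = 1 / 2 := by
  have : ∫ x in (0 : ℝ)..1, Int.fract x = ∫ x in (0 : ℝ)..1, x := by
    apply intervalIntegral.integral_congr_ae
    have h1 : ∀ᵐ x : ℝ ∂volume, x ≠ 1 := by
      simp [ae_iff]
    filter_upwards [h1] with x hx hx2
    rw [Set.uIoc_of_le zero_le_one] at hx2
    exact Int.fract_eq_self.2 ⟨hx2.1.le, lt_of_le_of_ne hx2.2 hx⟩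
  rw [this]; norm_num

lemma fract_periodic : Function.Periodic (fun x : ℝ => Int.fract x) 1 := by
  intro x; simp

lemma bdd_intervalIntegrable {f : ℝ → ℝ} (hf : Measurable f) (C : ℝ) (hC : ∀ x, |f x| ≤ C)
    (s t : ℝ) : IntervalIntegrable f volume s t := by
  have := (intervalIntegrable_const (μ := volume) (a := s) (b := t) (c := C))
  refine this.mono_fun' hf.aestronglyMeasurable ?_
  exact Filter.Eventually.of_forall fun x => by simpa using hC x

lemma fract_intervalIntegrable {f : ℝ → ℝ} (hf : Measurable f) (s t : ℝ) :
    IntervalIntegrable (fun x => Int.fract (f x)) volume s t := by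
  refine bdd_intervalIntegrable (by fun_prop) 1 (fun x => ?_) s t
  rw [abs_of_nonneg (Int.fract_nonneg _)]
  exact (Int.fract_lt_one _).le

lemma pcF_eq_fract (p q x : ℝ) :
    pcF p q x = (q - p + 1) - Int.fract (q - x) - Int.fract (x - p) := by
  unfold pcF Int.fract
  push_cast; ring

lemma pcF_integral (p q : ℝ) : ∫ x in (0 : ℝ)..1, pcF p q x = q - p := by
  simp_rw [pcF_eq_fract]
  rw [intervalIntegral.integral_sub, intervalIntegral.integral_sub]
  · have h1 : ∫ x in (0 : ℝ)..1, Int.fract (q - x) = 1 / 2 := by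
      rw [intervalIntegral.integral_comp_sub_left (fun x => Int.fract x) q, ← integral_fract_period]
      have := fract_periodic.intervalIntegral_add_eq (q - 1) 0
      simpa using this
    have h2 : ∫ x in (0 : ℝ)..1, Int.fract (x - p) = 1 / 2 := by
      rw [intervalIntegral.integral_comp_sub_right (fun x => Int.fract x) p,
        ← integral_fract_period]
      have := fract_periodic.intervalIntegral_add_eq (0 - p) 0
      rw [show (0 : ℝ) - p + 1 = 1 - p by ring] at this
      simpa using this
    rw [h1, h2]
    simp
    ring
  · exact intervalIntegrable_const
  · exact fract_intervalIntegrable (by fun_prop) _ _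
  · exact intervalIntegrable_const.sub (fract_intervalIntegrable (by fun_prop) _ _)
  · exact fract_intervalIntegrable (by fun_prop) _ _

lemma pcF_periodic (p q : ℝ) : Function.Periodic (pcF p q) 1 := by
  intro x
  simpa using pcF_add_int p q x 1

lemma pcF_abs_le {p q : ℝ} (h : p ≤ q) (x : ℝ) : |pcF p q x| ≤ q - p + 1 := by
  rw [abs_of_nonneg (pcF_nonneg h x)]; exact pcF_le p q x

lemma pcF_integral_mul {p q : ℝ} (h : p ≤ q) (m : ℤ) (hm : m ≠ 0) :
    ∫ x in (0 : ℝ)..1, pcF p q (m * x) = q - p := by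
  have hm' : (m : ℝ) ≠ 0 := by exact_mod_cast hm
  rw [intervalIntegral.integral_comp_mul_left (pcF p q) hm']
  have := (pcF_periodic p q).intervalIntegral_add_zsmul_eq m 0
    (bdd_intervalIntegrable (pcF_measurable p q) _ (pcF_abs_le h))
  simp only [zero_add, zsmul_eq_mul, mul_one] at this
  rw [mul_zero, mul_one, this, pcF_integral, smul_eq_mul]
  field_simp

lemma pcF_cov_left {p q : ℝ} (h : p ≤ q) (m n : ℤ) (hm : m ≠ 0) :
    ∫ x in (0 : ℝ)..1, pcF p q (m * x) * pcF p q (n * x)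
      ≤ (q - p) ^ 2 + (q - p) * ((Int.gcd m n : ℝ) / |(m : ℝ)|) := by
  set g := Int.gcd m n with hg
  have hg0 : 0 < g := Int.gcd_pos_of_ne_zero_left _ hm
  have hg0' : (0 : ℝ) < g := by exact_mod_cast hg0
  have hm' : (m : ℝ) ≠ 0 := by exact_mod_cast hm
  obtain ⟨u, hu⟩ : g ∣ m.natAbs := by rw [hg, Int.gcd_def]; exact Nat.gcd_dvd_left _ _
  have hmabs : |(m : ℝ)| = g * u := by
    rw [← Int.cast_abs, Int.abs_eq_natAbs, hu]; push_cast; ring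
  have hu0 : 0 < u := by
    rcases Nat.eq_zero_or_pos u with h0 | h0
    · rw [h0] at hu; simp at hu; exact absurd hu hm
    · exact h0
  have hu0' : (0 : ℝ) < u := by exact_mod_cast hu0
  have hbez : (g : ℝ) = m * (Int.gcdA m n : ℝ) + n * (Int.gcdB m n : ℝ) := by
    exact_mod_cast Int.gcd_eq_gcd_ab m n
  set A := Int.gcdA m n
  set B := Int.gcdB m n
  have key : ∀ s : ℕ, ∫ x in (0 : ℝ)..1, pcF p q (m * x) * pcF p q (n * x)
      = ∫ x in (0 : ℝ)..1, pcF p q (m * x) * pcF p q (n * x + (s : ℝ) / u) := by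
    intro s
    have hper : Function.Periodic (fun x : ℝ => pcF p q (m * x) * pcF p q (n * x)) 1 := by
      intro x
      have e1 := pcF_add_int p q (m * x) m
      have e2 := pcF_add_int p q (n * x) n
      simp only [mul_add, mul_one, e1, e2]
    obtain ⟨σ, hσ⟩ : ∃ σ : ℤ, (m : ℝ) = σ * |(m : ℝ)| := by
      rcases abs_choice (m : ℝ) with h0 | h0
      · exact ⟨1, by rw [h0]; push_cast; ring⟩
      · exact ⟨-1, by rw [h0]; push_cast; ring⟩
    set τ : ℝ := s * B / |(m : ℝ)| with hτ
    have habs : |(m : ℝ)| ≠ 0 := abs_ne_zero.2 hm'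
    have hmτ : (m : ℝ) * τ = ((σ * s * B : ℤ) : ℝ) := by
      have e2 : (m : ℝ) / |(m : ℝ)| = σ := by
        rw [div_eq_iff habs]; exact hσ
      have e1 : (m : ℝ) * τ = s * B * (m / |(m : ℝ)|) := by
        rw [hτ]; field_simp
      rw [e1, e2]
      push_cast; ring
    have hnτ : (n : ℝ) * τ = (s : ℝ) / u + ((-(σ * s * A) : ℤ) : ℝ) := by
      have e1 : (n : ℝ) * τ = s * (g / |(m : ℝ)|) - s * A * (m / |(m : ℝ)|) := by
        rw [hτ, hbez]; field_simp; ring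
      have e2 : (m : ℝ) / |(m : ℝ)| = σ := by
        rw [div_eq_iff habs]; exact hσ
      rw [e1, e2, hmabs]
      push_cast; field_simp; ring
    have h1 := hper.intervalIntegral_add_eq τ 0
    have h2 := intervalIntegral.integral_comp_add_right (a := 0) (b := 1)
      (fun x : ℝ => pcF p q (m * x) * pcF p q (n * x)) τ
    rw [zero_add] at h1 h2
    rw [add_comm, ← h2] at h1
    rw [← h1]
    refine intervalIntegral.integral_congr fun x _ => ?_
    simp only [mul_add]
    rw [hmτ, hnτ, pcF_add_int, ← add_assoc, pcF_add_int]
  have hmeas : ∀ (k : ℤ) (c : ℝ), Measurable fun x : ℝ => pcF p q (k * x + c) := fun k c =>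
    (pcF_measurable p q).comp (by fun_prop)
  have hii : ∀ s : ℕ, IntervalIntegrable
      (fun x : ℝ => pcF p q (m * x) * pcF p q (n * x + (s : ℝ) / u)) volume 0 1 := by
    intro s
    refine bdd_intervalIntegrable ?_ ((q - p + 1) * (q - p + 1)) (fun x => ?_) _ _
    · exact (by simpa using hmeas m 0 : Measurable fun x : ℝ => pcF p q (m * x)).mul (hmeas n _)
    · rw [abs_mul]
      exact mul_le_mul (pcF_abs_le h _) (pcF_abs_le h _) (abs_nonneg _) (by linarith)
  have hsum : (u : ℝ) * ∫ x in (0 : ℝ)..1, pcF p q (m * x) * pcF p q (n * x)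
      = ∫ x in (0 : ℝ)..1, ∑ s ∈ Finset.range u,
          pcF p q (m * x) * pcF p q (n * x + (s : ℝ) / u) := by
    rw [intervalIntegral.integral_finsetSum fun s _ => hii s,
      ← Finset.sum_congr rfl fun s _ => key s]
    simp
  have hle : ∫ x in (0 : ℝ)..1, ∑ s ∈ Finset.range u,
          pcF p q (m * x) * pcF p q (n * x + (s : ℝ) / u)
      ≤ ∫ x in (0 : ℝ)..1, pcF p q (m * x) * (u * (q - p) + 1) := by
    refine intervalIntegral.integral_mono_on zero_le_one ?_ ?_ fun x _ => ?_
    · have := IntervalIntegrable.sum (Finset.range u) (fun s _ => hii s)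
      simpa [Finset.sum_fn] using this
    · refine IntervalIntegrable.mul_const ?_ _
      exact bdd_intervalIntegrable (by simpa using hmeas m 0) _ (fun x => pcF_abs_le h _) _ _
    · rw [← Finset.mul_sum]
      exact mul_le_mul_of_nonneg_left (pcF_sum_le p q _ u hu0) (pcF_nonneg h _)
  rw [intervalIntegral.integral_mul_const, pcF_integral_mul h m hm, ← hsum] at hle
  rw [hmabs]
  have : ∫ x in (0 : ℝ)..1, pcF p q (m * x) * pcF p q (n * x)
      ≤ ((q - p) * (u * (q - p) + 1)) / u := by
    rw [le_div_iff₀ hu0']; linarith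
  refine this.trans (le_of_eq ?_)
  field_simp

lemma pcF_cov {p q : ℝ} (h : p ≤ q) (m n : ℤ) (hm : m ≠ 0) (hn : n ≠ 0) :
    ∫ x in (0 : ℝ)..1, pcF p q (m * x) * pcF p q (n * x)
      ≤ (q - p) ^ 2 + (q - p) * ((Int.gcd m n : ℝ) / (√|(m : ℝ)| * √|(n : ℝ)|)) := by
  have hm' : 0 < |(m : ℝ)| := by positivity
  have hn' : 0 < |(n : ℝ)| := by positivity
  have h1 := pcF_cov_left h m n hm
  have h2 := pcF_cov_left h n m hn
  rw [Int.gcd_comm] at h2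
  simp_rw [mul_comm (pcF p q (n * _))] at h2
  rcases le_total |(m : ℝ)| |(n : ℝ)| with h3 | h3
  · refine h2.trans ?_
    have h0 : 0 ≤ q - p := by linarith
    gcongr
    · calc √|(m : ℝ)| * √|(n : ℝ)| ≤ √|(n : ℝ)| * √|(n : ℝ)| := by gcongr
        _ = _ := Real.mul_self_sqrt hn'.le
  · refine h1.trans ?_
    have h0 : 0 ≤ q - p := by linarith
    gcongr
    · calc √|(m : ℝ)| * √|(n : ℝ)| ≤ √|(m : ℝ)| * √|(m : ℝ)| := by gcongr
        _ = _ := Real.mul_self_sqrt hm'.le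

lemma sum_le_of_injOn {ι κ : Type*} [DecidableEq κ] (s : Finset ι) (t : Finset κ) (e : ι → κ)
    (hmaps : ∀ i ∈ s, e i ∈ t) (hinj : Set.InjOn e s) (F : ι → ℝ) (G : κ → ℝ)
    (hFG : ∀ i ∈ s, F i ≤ G (e i)) (hG : ∀ k ∈ t, 0 ≤ G k) :
    ∑ i ∈ s, F i ≤ ∑ k ∈ t, G k := by
  calc ∑ i ∈ s, F i ≤ ∑ i ∈ s, G (e i) := Finset.sum_le_sum hFG
    _ = ∑ k ∈ s.image e, G k := (Finset.sum_image (fun a ha b hb hab => hinj ha hb hab)).symm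
    _ ≤ ∑ k ∈ t, G k := by
      refine Finset.sum_le_sum_of_subset_of_nonneg ?_ fun k hk _ => hG k hk
      intro k hk
      obtain ⟨i, hi, rfl⟩ := Finset.mem_image.1 hk
      exact hmaps i hi

lemma sum_dvd_le (M e : ℕ) (he : 0 < e) (F : ℕ → ℝ) (hF : ∀ n, 0 ≤ F n) :
    (∑ x ∈ Finset.Icc 1 M, if e ∣ x then F x else 0)
      ≤ ∑ k ∈ Finset.Icc 1 (M / e), F (e * k) := by
  rw [← Finset.sum_filter]
  refine sum_le_of_injOn _ _ (fun x => x / e) ?_ ?_ _ _ ?_ fun k _ => hF _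
  · intro x hx
    simp only [Finset.mem_filter, Finset.mem_Icc] at hx ⊢
    exact ⟨Nat.div_pos (Nat.le_of_dvd (by omega) hx.2) he, Nat.div_le_div_right hx.1.2⟩
  · intro x hx y hy hxy
    simp only [Finset.coe_filter, Finset.mem_Icc, Set.mem_ofPred_eq] at hx hy hxy
    rw [← Nat.mul_div_cancel' hx.2, ← Nat.mul_div_cancel' hy.2, hxy]
  · intro x hx
    simp only [Finset.mem_filter] at hx
    rw [Nat.mul_div_cancel' hx.2]

lemma sum_inv_sqrt (n : ℕ) : ∑ k ∈ Finset.Icc 1 n, 1 / √(k : ℝ) ≤ 2 * √(n : ℝ) := by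
  induction n with
  | zero => simp
  | succ n ih =>
    rw [Finset.sum_Icc_succ_top (by omega)]
    have h0 : (0 : ℝ) < √((n + 1 : ℕ) : ℝ) := Real.sqrt_pos.2 (by positivity)
    have h1 : √((n + 1 : ℕ) : ℝ) ^ 2 = n + 1 := by rw [Real.sq_sqrt (by positivity)]; push_cast; ring
    have h2 : √(n : ℝ) ^ 2 = n := Real.sq_sqrt (by positivity)
    have h3 := Real.sqrt_nonneg (n : ℝ)
    set a := √((n + 1 : ℕ) : ℝ)
    set b := √(n : ℝ)
    have : 1 / a ≤ 2 * a - 2 * b := by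
      rw [div_le_iff₀ h0]
      nlinarith [sq_nonneg (a - b)]
    linarith

lemma sum_dvd_inv_sqrt (M e : ℕ) (he : 0 < e) :
    (∑ x ∈ Finset.Icc 1 M, if e ∣ x then 1 / √(x : ℝ) else 0) ≤ 2 * √(M : ℝ) / e := by
  have he' : (0 : ℝ) < e := by exact_mod_cast he
  refine (sum_dvd_le M e he (fun x => 1 / √(x : ℝ)) (fun n => by positivity)).trans ?_
  have : ∀ k ∈ Finset.Icc 1 (M / e), 1 / √((e * k : ℕ) : ℝ) = 1 / √(e : ℝ) * (1 / √(k : ℝ)) := by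
    intro k _
    rw [Nat.cast_mul, Real.sqrt_mul he'.le, one_div_mul_one_div]
  rw [Finset.sum_congr rfl this, ← Finset.mul_sum]
  have hs : (0 : ℝ) < √(e : ℝ) := Real.sqrt_pos.2 he'
  calc 1 / √(e : ℝ) * ∑ k ∈ Finset.Icc 1 (M / e), 1 / √(k : ℝ)
      ≤ 1 / √(e : ℝ) * (2 * √((M / e : ℕ) : ℝ)) := by
        gcongr; exact sum_inv_sqrt _
    _ ≤ 1 / √(e : ℝ) * (2 * √((M : ℝ) / e)) := by
        gcongr; exact Nat.cast_div_le
    _ = 2 * √(M : ℝ) / (√(e : ℝ) * √(e : ℝ)) := by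
        rw [Real.sqrt_div (by positivity)]; field_simp
    _ = _ := by rw [Real.mul_self_sqrt he'.le]

lemma sum_tau_le (X : ℕ) (F : ℕ → ℝ) (hF : ∀ n, 0 ≤ F n) :
    ∑ n ∈ Finset.Icc 1 X, (n.divisors.card : ℝ) * F n
      ≤ ∑ a ∈ Finset.Icc 1 X, ∑ b ∈ Finset.Icc 1 X, F (a * b) := by
  have h1 : ∀ n ∈ Finset.Icc 1 X, (n.divisors.card : ℝ) * F n
      = ∑ a ∈ Finset.Icc 1 X, if a ∣ n then F n else 0 := by
    intro n hn
    rw [← Finset.sum_filter, Finset.sum_const, nsmul_eq_mul]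
    congr 3
    ext d
    simp only [Nat.mem_divisors, Finset.mem_filter, Finset.mem_Icc] at hn ⊢
    constructor
    · intro h
      have := Nat.le_of_dvd (by omega) h.1
      have := Nat.pos_of_dvd_of_pos h.1 (by omega)
      exact ⟨⟨by omega, by omega⟩, h.1⟩
    · intro h; exact ⟨h.2, by omega⟩
  rw [Finset.sum_congr rfl h1, Finset.sum_comm]
  refine Finset.sum_le_sum fun a ha => ?_
  refine (sum_dvd_le X a (Finset.mem_Icc.1 ha).1 F hF).trans ?_
  refine Finset.sum_le_sum_of_subset_of_nonneg ?_ fun k _ _ => hF _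
  exact Finset.Icc_subset_Icc_right (Nat.div_le_self _ _)

lemma tau_mul_le (a b : ℕ) : (a * b).divisors.card ≤ a.divisors.card * b.divisors.card := by
  rw [Nat.divisors_mul]
  exact Finset.card_mul_le

lemma sum_tau_sq (X : ℕ) :
    ∑ n ∈ Finset.Icc 1 X, (n.divisors.card : ℝ) ^ 2 / n
      ≤ (∑ k ∈ Finset.Icc 1 X, 1 / (k : ℝ)) ^ 4 := by
  set H := ∑ k ∈ Finset.Icc 1 X, 1 / (k : ℝ)
  have h1 : ∑ n ∈ Finset.Icc 1 X, (n.divisors.card : ℝ) / n ≤ H ^ 2 := by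
    have := sum_tau_le X (fun n => 1 / (n : ℝ)) (fun n => by positivity)
    simp only [mul_one_div, Nat.cast_mul] at this
    refine this.trans (le_of_eq ?_)
    simp only [H, pow_two, Finset.sum_mul_sum, one_div_mul_one_div]
  have h2 := sum_tau_le X (fun n => (n.divisors.card : ℝ) / n) (fun n => by positivity)
  have h3 : ∑ a ∈ Finset.Icc 1 X, ∑ b ∈ Finset.Icc 1 X, (((a * b).divisors.card : ℝ) / (a * b : ℕ))
      ≤ (∑ n ∈ Finset.Icc 1 X, (n.divisors.card : ℝ) / n) ^ 2 := by
    rw [pow_two, Finset.sum_mul_sum]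
    refine Finset.sum_le_sum fun a _ => Finset.sum_le_sum fun b _ => ?_
    rw [div_mul_div_comm, Nat.cast_mul]
    gcongr
    exact_mod_cast tau_mul_le a b
  calc ∑ n ∈ Finset.Icc 1 X, (n.divisors.card : ℝ) ^ 2 / n
      = ∑ n ∈ Finset.Icc 1 X, (n.divisors.card : ℝ) * ((n.divisors.card : ℝ) / n) := by
        refine Finset.sum_congr rfl fun n _ => by ring
    _ ≤ _ := h2
    _ ≤ _ := h3
    _ ≤ (H ^ 2) ^ 2 := by
        gcongr
    _ = H ^ 4 := by ring

def pcP (N : ℕ) : Finset (ℕ × ℕ) :=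
  (Finset.Icc 1 N ×ˢ Finset.Icc 1 N).filter fun jk => jk.1 ≠ jk.2

def pcM (jk : ℕ × ℕ) : ℤ := (jk.1 : ℤ) ^ 2 - (jk.2 : ℤ) ^ 2

def pcW (jk : ℕ × ℕ) : ℕ := ((jk.1 : ℤ) - jk.2).natAbs * (jk.1 + jk.2)

lemma pcM_natAbs (jk : ℕ × ℕ) : (pcM jk).natAbs = pcW jk := by
  unfold pcM pcW
  rw [show (jk.1 : ℤ) ^ 2 - (jk.2 : ℤ) ^ 2 = ((jk.1 : ℤ) - jk.2) * ((jk.1 + jk.2 : ℕ) : ℤ) by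
    push_cast; ring, Int.natAbs_mul, Int.natAbs_natCast]

lemma sum_xy (N d : ℕ) (hd : 0 < d) :
    (∑ xy ∈ Finset.Icc 1 (2 * N) ×ˢ Finset.Icc 1 (2 * N),
      if d ∣ xy.1 * xy.2 then 1 / √((xy.1 * xy.2 : ℕ) : ℝ) else 0)
      ≤ 8 * N * d.divisors.card / d := by
  set M := 2 * N
  calc (∑ xy ∈ Finset.Icc 1 M ×ˢ Finset.Icc 1 M,
      if d ∣ xy.1 * xy.2 then 1 / √((xy.1 * xy.2 : ℕ) : ℝ) else 0)
      ≤ ∑ xy ∈ Finset.Icc 1 M ×ˢ Finset.Icc 1 M, ∑ e ∈ d.divisorsAntidiagonal,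
        (if e.1 ∣ xy.1 then 1 / √(xy.1 : ℝ) else 0) * (if e.2 ∣ xy.2 then 1 / √(xy.2 : ℝ) else 0) := by
        refine Finset.sum_le_sum fun xy _ => ?_
        have hnn : ∀ e ∈ d.divisorsAntidiagonal, 0 ≤ (if e.1 ∣ xy.1 then 1 / √(xy.1 : ℝ) else 0) *
            (if e.2 ∣ xy.2 then 1 / √(xy.2 : ℝ) else 0) := by
          intro e _
          apply mul_nonneg <;> split_ifs <;> positivity
        split_ifs with h
        · obtain ⟨d1, d2, h1, h2, h3⟩ := exists_dvd_and_dvd_of_dvd_mul h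
          have hmem : (d1, d2) ∈ d.divisorsAntidiagonal := by
            rw [Nat.mem_divisorsAntidiagonal]; exact ⟨h3.symm, hd.ne'⟩
          refine le_trans (le_of_eq ?_) (Finset.single_le_sum hnn hmem)
          simp only [h1, h2, if_true]
          rw [Nat.cast_mul, Real.sqrt_mul (by positivity), one_div_mul_one_div]
        · exact Finset.sum_nonneg hnn
    _ = ∑ e ∈ d.divisorsAntidiagonal, (∑ x ∈ Finset.Icc 1 M, if e.1 ∣ x then 1 / √(x : ℝ) else 0) *
          (∑ y ∈ Finset.Icc 1 M, if e.2 ∣ y then 1 / √(y : ℝ) else 0) := by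
        rw [Finset.sum_comm]
        refine Finset.sum_congr rfl fun e _ => ?_
        rw [Finset.sum_mul_sum, Finset.sum_product]
    _ ≤ ∑ e ∈ d.divisorsAntidiagonal, 8 * N / (d : ℝ) := by
        refine Finset.sum_le_sum fun e he => ?_
        rw [Nat.mem_divisorsAntidiagonal] at he
        have h1 : 0 < e.1 := Nat.pos_of_ne_zero fun h => by rw [h] at he; simp at he; omega
        have h2 : 0 < e.2 := Nat.pos_of_ne_zero fun h => by rw [h] at he; simp at he; omega
        have hnn : 0 ≤ (∑ y ∈ Finset.Icc 1 M, if e.2 ∣ y then 1 / √(y : ℝ) else 0) :=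
          Finset.sum_nonneg fun y _ => by split_ifs <;> positivity
        refine (mul_le_mul (sum_dvd_inv_sqrt M e.1 h1) (sum_dvd_inv_sqrt M e.2 h2) hnn
          (by positivity)).trans (le_of_eq ?_)
        rw [div_mul_div_comm, ← Nat.cast_mul, he.1]
        congr 1
        rw [show 2 * √(M : ℝ) * (2 * √(M : ℝ)) = 4 * (√(M : ℝ) * √(M : ℝ)) by ring,
          Real.mul_self_sqrt (by positivity)]
        simp only [M]; push_cast; ring
    _ = _ := by
        rw [Finset.sum_const, ← Nat.map_div_right_divisors, Finset.card_map, nsmul_eq_mul]; ring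

lemma sum_P_dvd (N d : ℕ) (hd : 0 < d) :
    (∑ p ∈ pcP N, if d ∣ pcW p then 1 / √(pcW p : ℝ) else 0) ≤ 16 * N * d.divisors.card / d := by
  rw [← Finset.sum_filter_add_sum_filter_not (pcP N) (fun p => p.1 < p.2)]
  have h1 := sum_xy N d hd
  have key : ∀ s ⊆ pcP N, Set.InjOn (fun p : ℕ × ℕ => (((p.1 : ℤ) - p.2).natAbs, p.1 + p.2)) s →
      (∑ p ∈ s, if d ∣ pcW p then 1 / √(pcW p : ℝ) else 0) ≤ 8 * N * d.divisors.card / d := by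
    intro s hs hinj
    refine le_trans ?_ h1
    refine sum_le_of_injOn _ _ _ ?_ hinj _ _ ?_ ?_
    · intro p hp
      have := hs hp
      simp only [pcP, Finset.mem_filter, Finset.mem_product, Finset.mem_Icc] at this ⊢
      omega
    · intro p _
      exact le_rfl
    · intro p _
      split_ifs <;> positivity
  have k1 := key _ (Finset.filter_subset (fun p => p.1 < p.2) (pcP N)) (by
    intro p hp p' hp' h
    simp only [Finset.coe_filter, Set.mem_ofPred_eq, Prod.mk.injEq] at hp hp' h
    ext <;> omega)
  have k2 := key _ (Finset.filter_subset (fun p => ¬ p.1 < p.2) (pcP N)) (by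
    intro p hp p' hp' h
    simp only [Finset.coe_filter, Set.mem_ofPred_eq, Prod.mk.injEq] at hp hp' h
    ext <;> omega)
  calc _ ≤ _ := add_le_add k1 k2
    _ = _ := by ring

lemma pcW_pos {N : ℕ} {p : ℕ × ℕ} (hp : p ∈ pcP N) : 0 < pcW p := by
  simp only [pcP, Finset.mem_filter, Finset.mem_product, Finset.mem_Icc] at hp
  unfold pcW
  apply Nat.mul_pos <;> omega

lemma pcW_le {N : ℕ} {p : ℕ × ℕ} (hp : p ∈ pcP N) : pcW p ≤ N ^ 2 := by
  rw [← pcM_natAbs]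
  simp only [pcP, Finset.mem_filter, Finset.mem_product, Finset.mem_Icc] at hp
  unfold pcM
  have h1 : p.1 ^ 2 ≤ N ^ 2 := Nat.pow_le_pow_left hp.1.1.2 2
  have h2 : p.2 ^ 2 ≤ N ^ 2 := Nat.pow_le_pow_left hp.1.2.2 2
  zify at h1 h2 ⊢
  rw [abs_le]
  constructor <;> nlinarith [sq_nonneg (p.1 : ℤ), sq_nonneg (p.2 : ℤ)]

lemma sum_gcd_le (N : ℕ) :
    ∑ p ∈ pcP N, ∑ p' ∈ pcP N, (Nat.gcd (pcW p) (pcW p') : ℝ) / (√(pcW p : ℝ) * √(pcW p' : ℝ))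
      ≤ 256 * N ^ 2 * (1 + Real.log ((N : ℝ) ^ 2)) ^ 4 := by
  calc ∑ p ∈ pcP N, ∑ p' ∈ pcP N, (Nat.gcd (pcW p) (pcW p') : ℝ) / (√(pcW p : ℝ) * √(pcW p' : ℝ))
      ≤ ∑ p ∈ pcP N, ∑ p' ∈ pcP N, ∑ d ∈ Finset.Icc 1 (N ^ 2), (d : ℝ) *
        ((if d ∣ pcW p then 1 / √(pcW p : ℝ) else 0) *
         (if d ∣ pcW p' then 1 / √(pcW p' : ℝ) else 0)) := by
        refine Finset.sum_le_sum fun p hp => Finset.sum_le_sum fun p' hp' => ?_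
        set g := Nat.gcd (pcW p) (pcW p') with hg
        have hmem : g ∈ Finset.Icc 1 (N ^ 2) := by
          rw [Finset.mem_Icc]
          exact ⟨Nat.gcd_pos_of_pos_left _ (pcW_pos hp),
            (Nat.gcd_le_left _ (pcW_pos hp)).trans (pcW_le hp)⟩
        refine le_trans (le_of_eq ?_) (Finset.single_le_sum (fun d _ => ?_) hmem)
        · rw [if_pos (Nat.gcd_dvd_left _ _), if_pos (Nat.gcd_dvd_right _ _), one_div_mul_one_div,
            mul_one_div]
        · apply mul_nonneg (by positivity)
          apply mul_nonneg <;> split_ifs <;> positivity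
    _ = ∑ d ∈ Finset.Icc 1 (N ^ 2), (d : ℝ) *
        (∑ p ∈ pcP N, if d ∣ pcW p then 1 / √(pcW p : ℝ) else 0) ^ 2 := by
        simp_rw [pow_two (Finset.sum _ _), Finset.sum_mul_sum, Finset.mul_sum]
        symm
        rw [Finset.sum_comm]
        refine Finset.sum_congr rfl fun p _ => ?_
        rw [Finset.sum_comm]
    _ ≤ ∑ d ∈ Finset.Icc 1 (N ^ 2), 256 * (N : ℝ) ^ 2 * ((d.divisors.card : ℝ) ^ 2 / d) := by
        refine Finset.sum_le_sum fun d hd => ?_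
        have hd0 : 0 < d := (Finset.mem_Icc.1 hd).1
        have hd' : (0 : ℝ) < d := by exact_mod_cast hd0
        have hnn : 0 ≤ (∑ p ∈ pcP N, if d ∣ pcW p then 1 / √(pcW p : ℝ) else 0) :=
          Finset.sum_nonneg fun y _ => by split_ifs <;> positivity
        calc _ ≤ (d : ℝ) * (16 * N * d.divisors.card / d) ^ 2 := by
              gcongr; exact sum_P_dvd N d hd0
          _ = _ := by field_simp; ring
    _ ≤ 256 * (N : ℝ) ^ 2 * (∑ k ∈ Finset.Icc 1 (N ^ 2), 1 / (k : ℝ)) ^ 4 := by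
        rw [← Finset.mul_sum]
        gcongr
        exact sum_tau_sq _
    _ ≤ _ := by
        gcongr
        have := harmonic_le_one_add_log (N ^ 2)
        rw [harmonic_eq_sum_Icc] at this
        push_cast at this
        simpa [one_div] using this

noncomputable def pcX (N : ℕ) (a b α : ℝ) : ℝ :=
  ∑ p ∈ pcP N, pcF (a / N) (b / N) ((pcM p : ℝ) * α)

lemma pcM_ne_zero {N : ℕ} {p : ℕ × ℕ} (hp : p ∈ pcP N) : pcM p ≠ 0 := by
  rw [← Int.natAbs_pos, pcM_natAbs]; exact pcW_pos hp

lemma pcM_abs (p : ℕ × ℕ) : |(pcM p : ℝ)| = (pcW p : ℝ) := by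
  rw [← pcM_natAbs, Nat.cast_natAbs, Int.cast_abs]

lemma pcP_card (N : ℕ) : ((pcP N).card : ℝ) = N * N - N := by
  have : pcP N = (Finset.Icc 1 N).offDiag := by
    ext p
    simp [pcP, Finset.mem_offDiag, and_assoc]
  rw [this, Finset.offDiag_card, Nat.card_Icc, Nat.add_sub_cancel, Nat.cast_sub (Nat.le_mul_self N)]
  push_cast; ring

lemma pcX_measurable (N : ℕ) (a b : ℝ) : Measurable (pcX N a b) := by
  unfold pcX
  exact Finset.measurable_sum _ fun p _ => (pcF_measurable _ _).comp (by fun_prop)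

lemma pcX_periodic (N : ℕ) (a b : ℝ) : Function.Periodic (pcX N a b) 1 := by
  intro x
  unfold pcX
  refine Finset.sum_congr rfl fun p _ => ?_
  rw [mul_add, mul_one, pcF_add_int]

lemma pcX_bdd (N : ℕ) {a b : ℝ} (h : a ≤ b) (α : ℝ) :
    |pcX N a b α| ≤ (pcP N).card * (b / N - a / N + 1) := by
  unfold pcX
  refine (Finset.abs_sum_le_sum_abs _ _).trans ?_
  refine (Finset.sum_le_card_nsmul _ _ _ fun p _ => pcF_abs_le (by gcongr) _).trans ?_
  rw [nsmul_eq_mul]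

lemma pcX_variance (N : ℕ) {a b : ℝ} (h : a ≤ b) :
    ∫ α in (0 : ℝ)..1, (pcX N a b α - (pcP N).card * (b / N - a / N)) ^ 2
      ≤ (b / N - a / N) * (256 * N ^ 2 * (1 + Real.log ((N : ℝ) ^ 2)) ^ 4) := by
  set p := a / (N : ℝ)
  set q := b / (N : ℝ)
  have hpq : p ≤ q := by simp only [p, q]; gcongr
  set T : ℝ := (pcP N).card * (q - p) with hT
  have hXm := pcX_measurable N a b
  have hF : ∀ m : ℤ, IntervalIntegrable (fun α : ℝ => pcF p q (m * α)) volume 0 1 := fun m =>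
    bdd_intervalIntegrable ((pcF_measurable p q).comp (by fun_prop)) _ (fun x => pcF_abs_le hpq _) _ _
  have hFF : ∀ m n : ℤ, IntervalIntegrable (fun α : ℝ => pcF p q (m * α) * pcF p q (n * α))
      volume 0 1 := fun m n => by
    refine bdd_intervalIntegrable (((pcF_measurable p q).comp (by fun_prop)).mul
      ((pcF_measurable p q).comp (by fun_prop))) ((q - p + 1) * (q - p + 1)) (fun x => ?_) _ _
    simp only [Pi.mul_apply, Function.comp_apply]
    rw [abs_mul]
    exact mul_le_mul (pcF_abs_le hpq _) (pcF_abs_le hpq _) (abs_nonneg _) (by linarith)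
  have hX : IntervalIntegrable (pcX N a b) volume 0 1 :=
    bdd_intervalIntegrable hXm _ (pcX_bdd N h) _ _
  have hX2 : IntervalIntegrable (fun α => pcX N a b α ^ 2) volume 0 1 := by
    refine bdd_intervalIntegrable (hXm.pow_const 2) (((pcP N).card * (b / N - a / N + 1)) ^ 2)
      (fun x => ?_) _ _
    · rw [abs_pow]
      exact pow_le_pow_left₀ (abs_nonneg _) (pcX_bdd N h x) 2
  have hmean : ∫ α in (0 : ℝ)..1, pcX N a b α = T := by
    unfold pcX
    rw [intervalIntegral.integral_finsetSum fun i _ => hF _,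
      Finset.sum_congr rfl fun i hi => pcF_integral_mul hpq _ (pcM_ne_zero hi)]
    rw [Finset.sum_const, nsmul_eq_mul]
  have hsq : ∫ α in (0 : ℝ)..1, pcX N a b α ^ 2
      ≤ T ^ 2 + (q - p) * (256 * N ^ 2 * (1 + Real.log ((N : ℝ) ^ 2)) ^ 4) := by
    have e : ∀ α, pcX N a b α ^ 2 = ∑ i ∈ pcP N, ∑ j ∈ pcP N,
        pcF p q ((pcM i : ℝ) * α) * pcF p q ((pcM j : ℝ) * α) := by
      intro α
      rw [pow_two, pcX, Finset.sum_mul_sum]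
    simp_rw [e]
    rw [intervalIntegral.integral_finsetSum]
    swap
    · intro i _
      have := IntervalIntegrable.sum (pcP N) (fun j _ => hFF (pcM i) (pcM j))
      simpa [Finset.sum_fn] using this
    rw [Finset.sum_congr rfl fun i _ =>
      intervalIntegral.integral_finsetSum fun j _ => hFF (pcM i) (pcM j)]
    calc _ ≤ ∑ i ∈ pcP N, ∑ j ∈ pcP N, ((q - p) ^ 2 + (q - p) *
          ((Nat.gcd (pcW i) (pcW j) : ℝ) / (√(pcW i : ℝ) * √(pcW j : ℝ)))) := by
          refine Finset.sum_le_sum fun i hi => Finset.sum_le_sum fun j hj => ?_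
          have := pcF_cov hpq (pcM i) (pcM j) (pcM_ne_zero hi) (pcM_ne_zero hj)
          rwa [pcM_abs, pcM_abs, Int.gcd_def, pcM_natAbs, pcM_natAbs] at this
      _ = T ^ 2 + (q - p) * ∑ i ∈ pcP N, ∑ j ∈ pcP N,
          ((Nat.gcd (pcW i) (pcW j) : ℝ) / (√(pcW i : ℝ) * √(pcW j : ℝ))) := by
          simp_rw [Finset.sum_add_distrib, ← Finset.mul_sum, Finset.sum_const, nsmul_eq_mul]
          rw [hT]; ring
      _ ≤ _ := by
          have : 0 ≤ q - p := by linarith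
          gcongr
          exact sum_gcd_le N
  have hexp : ∫ α in (0 : ℝ)..1, (pcX N a b α - T) ^ 2
      = (∫ α in (0 : ℝ)..1, pcX N a b α ^ 2) - 2 * T * (∫ α in (0 : ℝ)..1, pcX N a b α) + T ^ 2 := by
    have e : ∀ α, (pcX N a b α - T) ^ 2 = pcX N a b α ^ 2 - 2 * T * pcX N a b α + T ^ 2 := by
      intro α; ring
    simp_rw [e]
    rw [intervalIntegral.integral_add (hX2.sub (hX.const_mul _)) intervalIntegrable_const,
      intervalIntegral.integral_sub hX2 (hX.const_mul _), intervalIntegral.integral_const_mul]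
    simp
  rw [hexp, hmean]
  nlinarith [hsq]

noncomputable def pcY (a b : ℝ) (k : ℕ) (α : ℝ) : ℝ :=
  (pcX (k ^ 4) a b α - (pcP (k ^ 4)).card * (b / (k ^ 4 : ℕ) - a / (k ^ 4 : ℕ))) / (k ^ 4 : ℕ)

lemma pcY_sq (a b : ℝ) (h : a ≤ b) (k : ℕ) (t : ℝ) :
    ∫ α in t..(t + 1), pcY a b k α ^ 2 ≤ (b - a) * (256 * 17 ^ 4) * (1 / (k : ℝ) ^ 2) := by
  have hper : Function.Periodic (fun α => pcY a b k α ^ 2) 1 := by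
    intro x
    simp only [pcY, pcX_periodic _ _ _ x]
  rw [hper.intervalIntegral_add_eq t 0, zero_add]
  rcases Nat.eq_zero_or_pos k with rfl | hk
  · simp [pcY]
  have hk' : (1 : ℝ) ≤ k := by exact_mod_cast hk
  have hk0 : (0 : ℝ) < k := by linarith
  have hv := pcX_variance (k ^ 4) h
  simp only [pcY, div_pow]
  rw [intervalIntegral.integral_div]
  have hN : (((k ^ 4 : ℕ)) : ℝ) = (k : ℝ) ^ 4 := by push_cast; ring
  rw [hN] at hv ⊢
  have hlog : 1 + Real.log (((k : ℝ) ^ 4) ^ 2) ≤ 17 * √(k : ℝ) := by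
    rw [← pow_mul, Real.log_pow]
    have h1 := Real.log_le_rpow_div hk0.le (ε := 1 / 2) (by norm_num)
    rw [← Real.sqrt_eq_rpow] at h1
    have h2 : 1 ≤ √(k : ℝ) := Real.one_le_sqrt.2 hk'
    push_cast
    linarith
  have hlog0 : 0 ≤ 1 + Real.log (((k : ℝ) ^ 4) ^ 2) := by
    have := Real.log_nonneg (x := ((k : ℝ) ^ 4) ^ 2) (one_le_pow₀ (one_le_pow₀ hk'))
    linarith
  have hlog4 : (1 + Real.log (((k : ℝ) ^ 4) ^ 2)) ^ 4 ≤ 17 ^ 4 * (k : ℝ) ^ 2 := by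
    refine (pow_le_pow_left₀ hlog0 hlog 4).trans (le_of_eq ?_)
    rw [mul_pow, show √(k : ℝ) ^ 4 = (√(k : ℝ) ^ 2) ^ 2 by ring, Real.sq_sqrt hk0.le]
  rw [div_le_iff₀ (by positivity)]
  refine hv.trans ?_
  rw [← sub_div]
  have hba : 0 ≤ b - a := by linarith
  calc (b - a) / (k : ℝ) ^ 4 * (256 * ((k : ℝ) ^ 4) ^ 2 * (1 + Real.log (((k : ℝ) ^ 4) ^ 2)) ^ 4)
      ≤ (b - a) / (k : ℝ) ^ 4 * (256 * ((k : ℝ) ^ 4) ^ 2 * (17 ^ 4 * (k : ℝ) ^ 2)) := by gcongr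
    _ = _ := by field_simp

lemma ae_tendsto_zero_of_sq {μ : Measure ℝ} (Y : ℕ → ℝ → ℝ) (hm : ∀ k, Measurable (Y k))
    (hi : ∀ k, Integrable (fun x => Y k x ^ 2) μ) (B : ℕ → ℝ) (hB : Summable B)
    (hY : ∀ k, ∫ x, Y k x ^ 2 ∂μ ≤ B k) :
    ∀ᵐ x ∂μ, Filter.Tendsto (fun k => Y k x) Filter.atTop (nhds 0) := by
  have hB0 : ∀ k, 0 ≤ B k := fun k => (integral_nonneg fun x => sq_nonneg _).trans (hY k)
  have h1 : ∫⁻ x, ∑' k, ENNReal.ofReal (Y k x ^ 2) ∂μ ≠ ⊤ := by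
    rw [lintegral_tsum fun k => ((hm k).pow_const 2).ennreal_ofReal.aemeasurable]
    refine ne_top_of_le_ne_top hB.tsum_ofReal_ne_top (ENNReal.tsum_le_tsum fun k => ?_)
    rw [← ofReal_integral_eq_lintegral_ofReal (hi k) (Filter.Eventually.of_forall fun x => sq_nonneg _)]
    exact ENNReal.ofReal_le_ofReal (hY k)
  have h2 := ae_lt_top' (AEMeasurable.tsum
    fun k => ((hm k).pow_const 2).ennreal_ofReal.aemeasurable) h1
  filter_upwards [h2] with x hx
  have h3 := ENNReal.tendsto_atTop_zero_of_tsum_ne_top hx.ne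
  have h4 := (ENNReal.tendsto_toReal ENNReal.zero_ne_top).comp h3
  simp only [Function.comp_def, ENNReal.toReal_ofReal (sq_nonneg _), ENNReal.toReal_zero] at h4
  have h5 := (Real.continuous_sqrt.tendsto 0).comp h4
  simp only [Function.comp_def, Real.sqrt_sq_eq_abs, Real.sqrt_zero] at h5
  exact (tendsto_zero_iff_abs_tendsto_zero _).2 h5

lemma pcY_ae (a b : ℝ) (h : a ≤ b) :
    ∀ᵐ α ∂(volume : Measure ℝ), Filter.Tendsto (fun k => pcY a b k α) Filter.atTop (nhds 0) := by
  rw [← Measure.restrict_univ (μ := (volume : Measure ℝ)), ← iUnion_Ioc_intCast ℝ,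
    ae_restrict_iUnion_iff]
  intro n
  have hm : ∀ k, Measurable (pcY a b k) := fun k =>
    ((pcX_measurable _ a b).sub_const _).div_const _
  refine ae_tendsto_zero_of_sq (pcY a b) hm ?_
    (fun k => (b - a) * (256 * 17 ^ 4) * (1 / (k : ℝ) ^ 2)) ?_ ?_
  · intro k
    have : IntervalIntegrable (fun x => pcY a b k x ^ 2) volume n (n + 1) := by
      obtain ⟨C, hC⟩ : ∃ C, ∀ x, |pcY a b k x| ≤ C := by
        refine ⟨((pcP (k ^ 4)).card * (b / (k ^ 4 : ℕ) - a / (k ^ 4 : ℕ) + 1) +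
          |(pcP (k ^ 4)).card * (b / (k ^ 4 : ℕ) - a / (k ^ 4 : ℕ))|) / |((k ^ 4 : ℕ) : ℝ)|,
          fun x => ?_⟩
        rw [pcY, abs_div]
        refine div_le_div_of_nonneg_right ?_ (abs_nonneg _)
        refine (abs_sub _ _).trans (add_le_add (pcX_bdd _ h x) le_rfl)
      refine bdd_intervalIntegrable ((hm k).pow_const 2) (C ^ 2) (fun x => ?_) _ _
      rw [abs_pow]
      exact pow_le_pow_left₀ (abs_nonneg _) (hC x) 2
    exact (intervalIntegrable_iff_integrableOn_Ioc_of_le (by linarith)).1 this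
  · exact (Real.summable_one_div_nat_pow.2 (by norm_num)).mul_left _
  · intro k
    have := pcY_sq a b h k n
    rwa [intervalIntegral.integral_of_le (by linarith)] at this

lemma pcX_ae (a b : ℝ) (h : a ≤ b) :
    ∀ᵐ α ∂(volume : Measure ℝ), Filter.Tendsto
      (fun k : ℕ => pcX (k ^ 4) a b α / ((k ^ 4 : ℕ) : ℝ)) Filter.atTop (nhds (b - a)) := by
  filter_upwards [pcY_ae a b h] with α hα
  have h1 : Filter.Tendsto (fun k : ℕ => (k : ℝ)⁻¹) Filter.atTop (nhds 0) :=
    tendsto_inv_atTop_nhds_zero_nat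
  have h2 := hα.add ((h1.pow 4).const_mul (b - a)|>.const_sub (b - a))
  simp only [ne_eq, OfNat.ofNat_ne_zero, not_false_eq_true, zero_pow, mul_zero, sub_zero,
    zero_add] at h2
  refine h2.congr' ?_
  filter_upwards [Filter.eventually_gt_atTop 0] with k hk
  have hk0 : (0 : ℝ) < k := by exact_mod_cast hk
  rw [pcY, pcP_card]
  push_cast
  field_simp
  ring

lemma pcF_eq_one {p q x : ℝ} (h : q - p < 1) (hx : ∃ m : ℤ, p ≤ x + m ∧ x + m ≤ q) :
    pcF p q x = 1 := by
  obtain ⟨m, h1, h2⟩ := hx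
  have e1 : m ≤ ⌊q - x⌋ := Int.le_floor.2 (by linarith)
  have e2 : -m ≤ ⌊x - p⌋ := Int.le_floor.2 (by push_cast; linarith)
  have e3 := pcF_le p q x
  unfold pcF at e3 ⊢
  have e4 : ⌊q - x⌋ + ⌊x - p⌋ + 1 < 2 := by
    have : ((⌊q - x⌋ + ⌊x - p⌋ + 1 : ℤ) : ℝ) < ((2 : ℤ) : ℝ) := by push_cast at e3 ⊢; linarith
    exact_mod_cast this
  have : ⌊q - x⌋ + ⌊x - p⌋ + 1 = 1 := by omega
  rw [this]; simp

lemma pcF_eq_zero {p q x : ℝ} (h : p ≤ q) (hx : ¬ ∃ m : ℤ, p ≤ x + m ∧ x + m ≤ q) :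
    pcF p q x = 0 := by
  have e0 := pcF_nonneg h x
  unfold pcF at e0 ⊢
  have e1 : 0 ≤ ⌊q - x⌋ + ⌊x - p⌋ + 1 := by exact_mod_cast e0
  by_contra hne
  have hne' : ⌊q - x⌋ + ⌊x - p⌋ + 1 ≠ 0 := fun h => hne (by rw [h]; simp)
  apply hx
  refine ⟨⌊q - x⌋, ?_, ?_⟩
  · have e2 : -⌊q - x⌋ ≤ ⌊x - p⌋ := by omega
    have e3 := Int.le_floor.1 e2
    push_cast at e3
    linarith
  · have := Int.floor_le (q - x)
    linarith

def pcS (N : ℕ) (p q α : ℝ) : Set (ℕ × ℕ) :=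
  {jk : ℕ × ℕ | 1 ≤ jk.1 ∧ jk.1 ≤ N ∧ 1 ≤ jk.2 ∧ jk.2 ≤ N ∧ jk.1 ≠ jk.2 ∧
              ∃ m : ℤ, p ≤ (jk.1 : ℝ) ^ 2 * α - (jk.2 : ℝ) ^ 2 * α + (m : ℝ) ∧
                (jk.1 : ℝ) ^ 2 * α - (jk.2 : ℝ) ^ 2 * α + (m : ℝ) ≤ q}

lemma pcS_finite (N : ℕ) (p q α : ℝ) : (pcS N p q α).Finite := by
  refine (Finset.finite_toSet (Finset.Icc 1 N ×ˢ Finset.Icc 1 N)).subset ?_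
  rintro jk ⟨h1, h2, h3, h4, -⟩
  simp only [Finset.coe_product, Finset.coe_Icc, Set.mem_prod, Set.mem_Icc]
  exact ⟨⟨h1, h2⟩, h3, h4⟩

lemma pcS_mono {N N' : ℕ} {p q p' q' : ℝ} (α : ℝ) (hN : N ≤ N') (hp : p' ≤ p) (hq : q ≤ q') :
    (pcS N p q α).ncard ≤ (pcS N' p' q' α).ncard := by
  refine Set.ncard_le_ncard ?_ (pcS_finite _ _ _ _)
  rintro jk ⟨h1, h2, h3, h4, h5, m, h6, h7⟩
  exact ⟨h1, h2.trans hN, h3, h4.trans hN, h5, m, hp.trans h6, h7.trans hq⟩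

lemma pcS_ncard (N : ℕ) {a b : ℝ} (α : ℝ) (h : a ≤ b) (hN : b / N - a / N < 1) :
    ((pcS N (a / N) (b / N) α).ncard : ℝ) = pcX N a b α := by
  classical
  have e : pcS N (a / N) (b / N) α = ((pcP N).filter fun jk =>
      ∃ m : ℤ, a / N ≤ (pcM jk : ℝ) * α + m ∧ (pcM jk : ℝ) * α + m ≤ b / N : Finset (ℕ × ℕ)) := by
    ext jk
    have : (pcM jk : ℝ) * α = (jk.1 : ℝ) ^ 2 * α - (jk.2 : ℝ) ^ 2 * α := by
      unfold pcM; push_cast; ring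
    simp only [pcS, pcP, Set.mem_ofPred_eq, Finset.coe_filter, Finset.mem_filter,
      Finset.mem_product, Finset.mem_Icc, this]
    tauto
  rw [e, Set.ncard_coe_finset, Finset.card_filter, pcX]
  push_cast
  refine Finset.sum_congr rfl fun p _ => ?_
  split_ifs with hx
  · rw [pcF_eq_one hN hx]
  · rw [pcF_eq_zero (by gcongr) hx]

/-- Convergence along fourth powers for rational endpoints. -/
lemma pcS_ae : ∀ᵐ α ∂(volume : Measure ℝ), ∀ a b : ℚ, a < b → Filter.Tendsto
    (fun k : ℕ => ((pcS (k ^ 4) ((a : ℝ) / (k ^ 4 : ℕ)) ((b : ℝ) / (k ^ 4 : ℕ)) α).ncard : ℝ)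
      / ((k ^ 4 : ℕ) : ℝ)) Filter.atTop (nhds ((b : ℝ) - a)) := by
  rw [ae_all_iff]; intro a
  rw [ae_all_iff]; intro b
  by_cases hab : a < b
  swap
  · exact Filter.Eventually.of_forall fun _ h => absurd h hab
  have hab' : (a : ℝ) ≤ b := by exact_mod_cast hab.le
  filter_upwards [pcX_ae a b hab'] with α hα _
  refine hα.congr' ?_
  have h1 : Filter.Tendsto (fun k : ℕ => ((b : ℝ) - a) / ((k ^ 4 : ℕ) : ℝ)) Filter.atTop (nhds 0) :=
    (tendsto_natCast_atTop_atTop.comp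
      (Filter.tendsto_pow_atTop (by norm_num))).const_div_atTop _
  filter_upwards [h1.eventually (gt_mem_nhds one_pos)] with k hk
  rw [pcS_ncard (k ^ 4) α hab' (by rw [← sub_div]; exact hk)]

def pcK (N : ℕ) : ℕ := Nat.sqrt (Nat.sqrt N)

lemma pcK_le (N : ℕ) : pcK N ^ 4 ≤ N := by
  have h1 := Nat.sqrt_le' (Nat.sqrt N)
  have h2 := Nat.sqrt_le' N
  calc pcK N ^ 4 = (Nat.sqrt (Nat.sqrt N) ^ 2) ^ 2 := by unfold pcK; ring
    _ ≤ Nat.sqrt N ^ 2 := Nat.pow_le_pow_left h1 2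
    _ ≤ N := h2

lemma lt_pcK (N : ℕ) : N < (pcK N + 1) ^ 4 := by
  have h1 := Nat.lt_succ_sqrt' (Nat.sqrt N)
  have h2 := Nat.lt_succ_sqrt' N
  calc N < (Nat.sqrt N + 1) ^ 2 := h2
    _ ≤ ((Nat.sqrt (Nat.sqrt N) + 1) ^ 2) ^ 2 := Nat.pow_le_pow_left h1 2
    _ = _ := by unfold pcK; ring

lemma pcK_tendsto : Filter.Tendsto pcK Filter.atTop Filter.atTop := by
  rw [Filter.tendsto_atTop]
  intro b
  filter_upwards [Filter.eventually_ge_atTop (b ^ 4)] with N hN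
  have := lt_pcK N
  by_contra hlt
  have h2 : (pcK N + 1) ^ 4 ≤ b ^ 4 := Nat.pow_le_pow_left (by omega) 4
  omega

lemma ratio_tendsto : Filter.Tendsto (fun k : ℕ => (((k + 1) ^ 4 : ℕ) : ℝ) / ((k ^ 4 : ℕ) : ℝ))
    Filter.atTop (nhds 1) := by
  have h1 : Filter.Tendsto (fun k : ℕ => (k : ℝ)⁻¹) Filter.atTop (nhds 0) :=
    tendsto_inv_atTop_nhds_zero_nat
  have h2 := (h1.const_add 1).pow 4
  simp only [add_zero, one_pow] at h2
  refine h2.congr' ?_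
  filter_upwards [Filter.eventually_gt_atTop 0] with k hk
  have hk0 : (0 : ℝ) < k := by exact_mod_cast hk
  push_cast
  field_simp

lemma up_tendsto : Filter.Tendsto (fun N : ℕ => (((pcK N + 1) ^ 4 : ℕ) : ℝ) / (N : ℝ))
    Filter.atTop (nhds 1) := by
  refine tendsto_of_tendsto_of_tendsto_of_le_of_le' tendsto_const_nhds
    (ratio_tendsto.comp pcK_tendsto) ?_ ?_
  · filter_upwards [Filter.eventually_gt_atTop 0] with N hN
    have hN0 : (0 : ℝ) < N := by exact_mod_cast hN
    rw [le_div_iff₀ hN0, one_mul]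
    exact_mod_cast (lt_pcK N).le
  · filter_upwards [pcK_tendsto.eventually_gt_atTop 0] with N hN
    have h0 : (0 : ℝ) < ((pcK N ^ 4 : ℕ) : ℝ) := by positivity
    have h1 : ((pcK N ^ 4 : ℕ) : ℝ) ≤ N := by exact_mod_cast pcK_le N
    simp only [Function.comp]
    gcongr

lemma down_tendsto : Filter.Tendsto (fun N : ℕ => ((pcK N ^ 4 : ℕ) : ℝ) / (N : ℝ))
    Filter.atTop (nhds 1) := by
  have h := (ratio_tendsto.comp pcK_tendsto).inv₀ one_ne_zero
  rw [inv_one] at h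
  refine tendsto_of_tendsto_of_tendsto_of_le_of_le' h tendsto_const_nhds ?_ ?_
  · filter_upwards [Filter.eventually_gt_atTop 0] with N hN
    have hN0 : (0 : ℝ) < N := by exact_mod_cast hN
    have h1 : (N : ℝ) ≤ (((pcK N + 1) ^ 4 : ℕ) : ℝ) := by exact_mod_cast (lt_pcK N).le
    simp only [Function.comp, inv_div]
    gcongr
  · filter_upwards [Filter.eventually_gt_atTop 0] with N hN
    have hN0 : (0 : ℝ) < N := by exact_mod_cast hN
    rw [div_le_iff₀ hN0, one_mul]
    exact_mod_cast pcK_le N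

lemma pcS_tendsto (α : ℝ) (H : ∀ a b : ℚ, a < b → Filter.Tendsto
    (fun k : ℕ => ((pcS (k ^ 4) ((a : ℝ) / (k ^ 4 : ℕ)) ((b : ℝ) / (k ^ 4 : ℕ)) α).ncard : ℝ)
      / ((k ^ 4 : ℕ) : ℝ)) Filter.atTop (nhds ((b : ℝ) - a))) (a b : ℝ) (hab : a < b) :
    Filter.Tendsto (fun N : ℕ => ((pcS N (a / N) (b / N) α).ncard : ℝ) / (N : ℝ))
      Filter.atTop (nhds (b - a)) := by
  rw [tendsto_order]
  constructor
  · intro c hc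
    obtain ⟨η, hη, hη1, hη2⟩ : ∃ η : ℝ, 0 < η ∧ c < b - a - 2 * η ∧ 2 * η < b - a := by
      refine ⟨min ((b - a - c) / 3) ((b - a) / 3), ?_, ?_, ?_⟩
      · apply lt_min <;> linarith
      · have := min_le_left ((b - a - c) / 3) ((b - a) / 3); linarith
      · have := min_le_right ((b - a - c) / 3) ((b - a) / 3); linarith
    obtain ⟨a', ha1, ha2⟩ := exists_rat_btwn (show a < a + η by linarith)
    obtain ⟨b', hb1, hb2⟩ := exists_rat_btwn (show b - η < b by linarith)
    have hab' : a' < b' := by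
      have : (a' : ℝ) < b' := by linarith
      exact_mod_cast this
    have h1 := ((H a' b' hab').comp pcK_tendsto).mul down_tendsto
    have h2 := down_tendsto.const_mul a
    have h3 := down_tendsto.const_mul b
    rw [mul_one] at h1 h2 h3
    filter_upwards [h1.eventually (lt_mem_nhds (show c < (b' : ℝ) - a' by linarith)),
      h2.eventually (gt_mem_nhds ha1), h3.eventually (lt_mem_nhds hb2),
      Filter.eventually_gt_atTop 0, pcK_tendsto.eventually_gt_atTop 0] with N g1 g2 g3 hN hK
    have hN0 : (0 : ℝ) < N := by exact_mod_cast hN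
    have hm0 : (0 : ℝ) < ((pcK N ^ 4 : ℕ) : ℝ) := by positivity
    refine g1.trans_le ?_
    simp only [Function.comp]
    rw [div_mul_div_cancel₀ hm0.ne']
    refine div_le_div_of_nonneg_right (Nat.cast_le.2 ?_) hN0.le
    refine pcS_mono α (pcK_le N) ?_ ?_
    · rw [le_div_iff₀ hm0]; refine le_of_eq_of_le ?_ g2.le; ring
    · rw [div_le_iff₀ hm0]; refine le_of_le_of_eq g3.le ?_; ring
  · intro c hc
    obtain ⟨η, hη, hη1⟩ : ∃ η : ℝ, 0 < η ∧ b - a + 2 * η < c := 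
      ⟨(c - (b - a)) / 3, by linarith, by linarith⟩
    obtain ⟨a', ha1, ha2⟩ := exists_rat_btwn (show a - η < a by linarith)
    obtain ⟨b', hb1, hb2⟩ := exists_rat_btwn (show b < b + η by linarith)
    have hab' : a' < b' := by
      have : (a' : ℝ) < b' := by linarith
      exact_mod_cast this
    have h1 := ((H a' b' hab').comp ((Filter.tendsto_add_atTop_nat 1).comp pcK_tendsto)).mul
      up_tendsto
    have h2 := up_tendsto.const_mul a
    have h3 := up_tendsto.const_mul b
    rw [mul_one] at h1 h2 h3
    filter_upwards [h1.eventually (gt_mem_nhds (show (b' : ℝ) - a' < c by linarith)),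
      h2.eventually (lt_mem_nhds ha2), h3.eventually (gt_mem_nhds hb1),
      Filter.eventually_gt_atTop 0] with N g1 g2 g3 hN
    have hN0 : (0 : ℝ) < N := by exact_mod_cast hN
    have hm0 : (0 : ℝ) < (((pcK N + 1) ^ 4 : ℕ) : ℝ) := by positivity
    refine lt_of_le_of_lt ?_ g1
    simp only [Function.comp]
    rw [div_mul_div_cancel₀ hm0.ne']
    refine div_le_div_of_nonneg_right (Nat.cast_le.2 ?_) hN0.le
    refine pcS_mono α (lt_pcK N).le ?_ ?_
    · rw [div_le_iff₀ hm0]; refine le_of_le_of_eq g2.le ?_; ring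
    · rw [le_div_iff₀ hm0]; refine le_of_eq_of_le ?_ g3.le; ring

/-- For almost every `α` the pair correlation of `n²α` mod one is Poissonian:
for all `a < b`,
`(1/N) · #{(j,k) : 1 ≤ j,k ≤ N, j ≠ k, j²α − k²α ∈ [a/N, b/N] + ℤ} → b − a` as `N → ∞`. -/
theorem stmt_4 :
    ∀ᵐ α ∂(volume : Measure ℝ), ∀ a b : ℝ, a < b →
      Filter.Tendsto
        (fun N : ℕ =>
          ((Set.ncard {jk : ℕ × ℕ | 1 ≤ jk.1 ∧ jk.1 ≤ N ∧ 1 ≤ jk.2 ∧ jk.2 ≤ N ∧ jk.1 ≠ jk.2 ∧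
              ∃ m : ℤ, a / (N : ℝ) ≤ (jk.1 : ℝ) ^ 2 * α - (jk.2 : ℝ) ^ 2 * α + (m : ℝ) ∧
                (jk.1 : ℝ) ^ 2 * α - (jk.2 : ℝ) ^ 2 * α + (m : ℝ) ≤ b / (N : ℝ)} : ℝ)
            / (N : ℝ)))
        Filter.atTop (nhds (b - a)) := by
  filter_upwards [pcS_ae] with α hα a b hab
  exact pcS_tendsto α hα a b hab
end

section
/- Let α ∈ ℝ, p ∈ ℤ, and let q, m be positive integers; set d = gcd(q, |m·p|) (with d = q when p = 0). Then for every y > 0 there exists γ ∈ SL(2,ℤ) such that Im(γ·(mα + iy)) ≥ d²·y / (q²y² + m²(p − qα)²). -/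
open scoped MatrixGroups UpperHalfPlane

/-- For `α ∈ ℝ`, `p ∈ ℤ`, positive integers `q, m` and `d = gcd(q, |mp|)`,
for every `y > 0` there is `γ ∈ SL(2,ℤ)` with
`Im(γ·(mα + iy)) ≥ d²y / (q²y² + m²(p − qα)²)`. -/
theorem stmt_11 (α : ℝ) (p : ℤ) (q m : ℕ) (hq : 0 < q) (hm : 0 < m)
    (y : ℝ) (hy : 0 < y) :
    ∃ γ : SL(2, ℤ),
      ((Nat.gcd q (m * p.natAbs) : ℝ)) ^ 2 * y /
          ((q : ℝ) ^ 2 * y ^ 2 + (m : ℝ) ^ 2 * ((p : ℝ) - (q : ℝ) * α) ^ 2)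
        ≤ (γ • UpperHalfPlane.mk ⟨(m : ℝ) * α, y⟩ hy).im := by
  set d : ℕ := Nat.gcd q (m * p.natAbs) with hd
  have hgcd : Int.gcd (q : ℤ) ((m : ℤ) * p) = d := by
    simp [hd, Int.gcd, Int.natAbs_mul]
  have hdpos : 0 < d := Nat.gcd_pos_of_pos_left _ hq
  obtain ⟨a, b, hab, ha, hb⟩ := Int.exists_gcd_one (m := (q : ℤ)) (n := (m : ℤ) * p)
    (by rw [hgcd]; exact hdpos)
  rw [hgcd] at ha hb
  have hcop : IsCoprime (-a) b := (Int.isCoprime_iff_gcd_eq_one.mpr hab).neg_left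
  obtain ⟨γ, -, hγ⟩ := ModularGroup.bottom_row_surj (R := ℤ)
    (show ![-a, b] ∈ {cd : Fin 2 → ℤ | IsCoprime (cd 0) (cd 1)} from hcop)
  have h0 : γ 1 0 = -a := congrFun hγ 0
  have h1 : γ 1 1 = b := congrFun hγ 1
  refine ⟨γ, le_of_eq ?_⟩
  rw [ModularGroup.im_smul_eq_div_normSq, ModularGroup.denom_apply, h0, h1]
  have haR : (q : ℝ) = a * d := by exact_mod_cast ha
  have hbR : (m : ℝ) * p = b * d := by exact_mod_cast hb
  have hdR : (0 : ℝ) < d := by exact_mod_cast hdpos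
  have hqR : (0 : ℝ) < q := by exact_mod_cast hq
  have haR0 : (a : ℝ) ≠ 0 := by
    intro h
    rw [h, zero_mul] at haR
    exact hqR.ne' haR
  have hN : Complex.normSq (((-a : ℤ) : ℂ) * ((UpperHalfPlane.mk ⟨(m : ℝ) * α, y⟩ hy : ℍ) : ℂ)
      + (b : ℂ)) = (a * y) ^ 2 + (b - a * (m * α)) ^ 2 := by
    simp [Complex.normSq_apply]
    ring
  have hD : (q : ℝ) ^ 2 * y ^ 2 + (m : ℝ) ^ 2 * ((p : ℝ) - (q : ℝ) * α) ^ 2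
      = d ^ 2 * ((a * y) ^ 2 + (b - a * (m * α)) ^ 2) := by
    have : (m : ℝ) ^ 2 * ((p : ℝ) - (q : ℝ) * α) ^ 2 = (m * p - q * (m * α)) ^ 2 := by ring
    rw [this, hbR, haR]
    ring
  rw [hN, hD]
  exact mul_div_mul_left _ _ (by positivity)
end

section
/- Let ν > 0 and let α ∈ ℝ, p ∈ ℤ and q a positive integer satisfy |α − p/q| ≤ (3q)^{−2−2/ν}. Then for every integer M with 4^{1/ν}·q^{2/ν} ≤ M ≤ 4^{−1/(2+ν)}·3^{4(1+ν)/(ν(2+ν))}·q^{2/ν}, and every integer m with 1 ≤ m ≤ M, there exists γ ∈ SL(2,ℤ) such that Im(γ·(mα + i·M^{−ν})) ≥ 2; equivalently, 𝒴(mα + i·M^{−ν}) ≥ 2 for all m ∈ {1, …, M}. -/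
open scoped MatrixGroups UpperHalfPlane

/-- `Im(γ·(x+iy))` for a point of the upper half-plane (zero if `y ≤ 0`). -/
noncomputable def imGammaPt (γ : SL(2, ℤ)) (x y : ℝ) : ℝ :=
  if h : 0 < y then (γ • UpperHalfPlane.mk ⟨x, y⟩ h).im else 0

/-- The invariant height `𝒴(x+iy) = sup_{γ ∈ SL(2,ℤ)} Im(γ·(x+iy))` (zero if `y ≤ 0`). -/
noncomputable def invHeightPt (x y : ℝ) : ℝ :=
  if h : 0 < y then ⨆ γ : SL(2, ℤ), (γ • UpperHalfPlane.mk ⟨x, y⟩ h).im else 0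

lemma im_smul_pt (γ : SL(2, ℤ)) (x y : ℝ) (h : 0 < y) :
    (γ • UpperHalfPlane.mk ⟨x, y⟩ h).im =
      y / (((γ 1 0 : ℤ) * x + (γ 1 1 : ℤ)) ^ 2 + (γ 1 0 : ℤ) ^ 2 * y ^ 2) := by
  rw [ModularGroup.im_smul_eq_div_normSq, ModularGroup.denom_apply]
  congr 1
  simp [Complex.normSq_apply]
  ring

lemma im_bdd (x y : ℝ) (h : 0 < y) :
    BddAbove (Set.range fun γ : SL(2, ℤ) => (γ • UpperHalfPlane.mk ⟨x, y⟩ h).im) := by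
  refine ⟨y + 1 / y, ?_⟩
  rintro _ ⟨γ, rfl⟩
  simp only
  rw [im_smul_pt]
  have hy : 0 < 1 / y := by positivity
  by_cases hc : γ 1 0 = 0
  · have hdet := γ.det_coe
    rw [Matrix.det_fin_two, hc] at hdet
    have hd : (γ 1 1) ≠ 0 := by
      intro h0
      rw [h0] at hdet
      simp at hdet
    have hd2 : (1 : ℝ) ≤ ((γ 1 1 : ℤ) : ℝ) ^ 2 := by
      have : 1 ≤ (γ 1 1) ^ 2 := by
        have := sq_pos_of_ne_zero hd
        omega
      exact_mod_cast this
    rw [hc]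
    have : y / (((0 : ℤ) * x + (γ 1 1 : ℤ)) ^ 2 + ((0 : ℤ) : ℝ) ^ 2 * y ^ 2) ≤ y := by
      apply div_le_self h.le
      simpa using hd2
    linarith
  · have hc2 : (1 : ℝ) ≤ ((γ 1 0 : ℤ) : ℝ) ^ 2 := by
      have : 1 ≤ (γ 1 0) ^ 2 := by
        have := sq_pos_of_ne_zero hc
        omega
      exact_mod_cast this
    have h2 : y ^ 2 ≤ (((γ 1 0 : ℤ) * x + (γ 1 1 : ℤ)) ^ 2 + (γ 1 0 : ℤ) ^ 2 * y ^ 2) := by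
      nlinarith [sq_nonneg ((γ 1 0 : ℤ) * x + (γ 1 1 : ℤ)), sq_nonneg y]
    have : y / (((γ 1 0 : ℤ) * x + (γ 1 1 : ℤ)) ^ 2 + (γ 1 0 : ℤ) ^ 2 * y ^ 2) ≤ y / y ^ 2 := by
      gcongr
    have e : y / y ^ 2 = 1 / y := by field_simp
    linarith

/-- If `|α − p/q| ≤ (3q)^{−2−2/ν}` then for every integer `M` with
`4^{1/ν}q^{2/ν} ≤ M ≤ 4^{−1/(2+ν)}·3^{4(1+ν)/(ν(2+ν))}·q^{2/ν}` and every `1 ≤ m ≤ M`,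
there is `γ ∈ SL(2,ℤ)` with `Im(γ·(mα + iM^{−ν})) ≥ 2`; equivalently
`𝒴(mα + iM^{−ν}) ≥ 2`. -/
theorem stmt_12 (ν : ℝ) (hν : 0 < ν) (α : ℝ) (p : ℤ) (q : ℕ) (hq : 0 < q)
    (happ : |α - (p : ℝ) / (q : ℝ)| ≤ (3 * (q : ℝ)) ^ (-(2 + 2 / ν)))
    (M : ℕ) (hM1 : (4 : ℝ) ^ (1 / ν) * (q : ℝ) ^ (2 / ν) ≤ (M : ℝ))
    (hM2 : (M : ℝ) ≤ (4 : ℝ) ^ (-(1 / (2 + ν))) * (3 : ℝ) ^ (4 * (1 + ν) / (ν * (2 + ν))) *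
      (q : ℝ) ^ (2 / ν))
    (m : ℕ) (hm1 : 1 ≤ m) (hmM : m ≤ M) :
    (∃ γ : SL(2, ℤ), 2 ≤ imGammaPt γ ((m : ℝ) * α) ((M : ℝ) ^ (-ν))) ∧
      2 ≤ invHeightPt ((m : ℝ) * α) ((M : ℝ) ^ (-ν)) := by
  have hM0 : (0 : ℝ) < M := by exact_mod_cast (by omega : 0 < M)
  have hq0 : (0 : ℝ) < q := by exact_mod_cast hq
  have hy : 0 < (M : ℝ) ^ (-ν) := by positivity
  -- first size bound
  have hA : 4 * (q : ℝ) ^ 2 ≤ (M : ℝ) ^ ν := by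
    have := Real.rpow_le_rpow (by positivity) hM1 hν.le
    rw [Real.mul_rpow (by positivity) (by positivity), ← Real.rpow_mul (by norm_num),
      ← Real.rpow_mul hq0.le, div_mul_cancel₀ _ hν.ne', div_mul_cancel₀ _ hν.ne',
      Real.rpow_one] at this
    exact_mod_cast this
  have hA' : (q : ℝ) ^ 2 * (M : ℝ) ^ (-ν) ≤ 1 / 4 := by
    rw [Real.rpow_neg hM0.le, ← div_eq_mul_inv, div_le_iff₀ (by positivity)]
    linarith
  -- second size bound
  have hB : (M : ℝ) ^ (2 + ν) ≤ 1 / 4 * (3 : ℝ) ^ (4 + 4 / ν) * (q : ℝ) ^ (2 + 4 / ν) := by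
    have h2ν : 0 < 2 + ν := by linarith
    have := Real.rpow_le_rpow (by positivity) hM2 h2ν.le
    rw [Real.mul_rpow (by positivity) (by positivity),
      Real.mul_rpow (by positivity) (by positivity), ← Real.rpow_mul (by norm_num),
      ← Real.rpow_mul (by norm_num), ← Real.rpow_mul hq0.le] at this
    have e1 : -(1 / (2 + ν)) * (2 + ν) = -1 := by field_simp
    have e2 : 4 * (1 + ν) / (ν * (2 + ν)) * (2 + ν) = 4 + 4 / ν := by field_simp; ring
    have e3 : 2 / ν * (2 + ν) = 2 + 4 / ν := by field_simp; ring
    rw [e1, e2, e3, Real.rpow_neg_one] at this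
    linarith
  have hB' : ((q : ℝ) * (M * (3 * (q : ℝ)) ^ (-(2 + 2 / ν)))) ^ 2 ≤ (M : ℝ) ^ (-ν) / 4 := by
    have e : ((3 * (q : ℝ)) ^ (-(2 + 2 / ν))) ^ 2
        = ((3 : ℝ) ^ (4 + 4 / ν))⁻¹ * ((q : ℝ) ^ (2 + 4 / ν) * (q : ℝ) ^ 2)⁻¹ := by
      rw [← Real.rpow_natCast, ← Real.rpow_natCast, ← Real.rpow_mul (by positivity),
        ← Real.rpow_add hq0, Real.mul_rpow (by norm_num) hq0.le, ← Real.rpow_neg (by norm_num),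
        ← Real.rpow_neg hq0.le]
      congr 2 <;> push_cast <;> ring
    have e' : (M : ℝ) ^ (2 + ν) = M ^ 2 * (M : ℝ) ^ ν := by
      rw [Real.rpow_add hM0]; norm_num
    rw [mul_pow, mul_pow, e, Real.rpow_neg hM0.le]
    rw [e'] at hB
    have h3 : 0 < (3 : ℝ) ^ (4 + 4 / ν) := by positivity
    have h4 : 0 < (q : ℝ) ^ (2 + 4 / ν) := by positivity
    have h5 : 0 < (M : ℝ) ^ ν := by positivity
    generalize (3 : ℝ) ^ (4 + 4 / ν) = A at *
    generalize (q : ℝ) ^ (2 + 4 / ν) = B at *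
    generalize (M : ℝ) ^ ν = C at *
    have : (q : ℝ) ^ 2 * (M ^ 2 * (A⁻¹ * (B * q ^ 2)⁻¹)) = M ^ 2 / (A * B) := by
      field_simp
    rw [this, div_le_iff₀ (by positivity), inv_eq_one_div, div_div, div_mul_eq_mul_div,
      le_div_iff₀ (by positivity)]
    linarith
  -- the bottom row
  have key : ∃ γ : SL(2, ℤ), 2 ≤ imGammaPt γ ((m : ℝ) * α) ((M : ℝ) ^ (-ν)) := by
    obtain ⟨g, c, d, hg, hcop, hc, hd⟩ : ∃ g c d : ℤ, 0 < g ∧ IsCoprime c d ∧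
        (q : ℤ) = c * g ∧ (m : ℤ) * p = d * g := by
      have hpos : 0 < Int.gcd (q : ℤ) (m * p) := Int.gcd_pos_of_ne_zero_left _ (by omega)
      obtain ⟨c, d, h1, h2, h3⟩ := Int.exists_gcd_one hpos
      exact ⟨_, c, d, by exact_mod_cast hpos, Int.isCoprime_iff_gcd_eq_one.2 h1, h2, h3⟩
    obtain ⟨u, v, huv⟩ := hcop
    let γ : SL(2, ℤ) := ⟨!![-v, -u; c, -d], by rw [Matrix.det_fin_two_of]; linarith⟩
    refine ⟨γ, ?_⟩
    rw [imGammaPt, dif_pos hy, im_smul_pt]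
    have h10 : γ 1 0 = c := rfl
    have h11 : γ 1 1 = -d := rfl
    rw [h10, h11]
    have hcR : (q : ℝ) = c * g := by exact_mod_cast hc
    have hdR : (m : ℝ) * p = d * g := by exact_mod_cast hd
    have hc0 : 0 < c := by
      have : 0 < c * g := by omega
      exact pos_of_mul_pos_left this hg.le
    have hcq : c ≤ q := by nlinarith
    have hc0R : (0 : ℝ) < c := by exact_mod_cast hc0
    have hgR : (0 : ℝ) < g := by exact_mod_cast hg
    have hcqR : (c : ℝ) ≤ q := by exact_mod_cast hcq
    have hmMR : (m : ℝ) ≤ M := by exact_mod_cast hmM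
    have hlin : (c : ℝ) * (m * α) + ((-d : ℤ) : ℝ) = c * (m * (α - p / q)) := by
      have : (c : ℝ) * (m * (p / q)) = d := by
        rw [← mul_div_assoc, hdR, hcR]
        field_simp
      push_cast
      linarith
    have hsq : ((c : ℝ) * (m * α) + ((-d : ℤ) : ℝ)) ^ 2 ≤ (M : ℝ) ^ (-ν) / 4 := by
      refine le_trans ?_ hB'
      rw [hlin, ← sq_abs, abs_mul, abs_mul, abs_of_pos hc0R, Nat.abs_cast]
      gcongr
    have hsq2 : (c : ℝ) ^ 2 * ((M : ℝ) ^ (-ν)) ^ 2 ≤ (M : ℝ) ^ (-ν) / 4 := by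
      have h1 : (c : ℝ) ^ 2 ≤ (q : ℝ) ^ 2 := by gcongr
      have h2 : (c : ℝ) ^ 2 * (M : ℝ) ^ (-ν) ≤ 1 / 4 :=
        (mul_le_mul_of_nonneg_right h1 hy.le).trans hA'
      nlinarith
    have hpos : 0 < (c : ℝ) ^ 2 * ((M : ℝ) ^ (-ν)) ^ 2 := by positivity
    rw [le_div_iff₀ (add_pos_of_nonneg_of_pos (sq_nonneg _) hpos)]
    linarith
  refine ⟨key, ?_⟩
  obtain ⟨γ, hγ⟩ := key
  rw [imGammaPt, dif_pos hy] at hγ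
  rw [invHeightPt, dif_pos hy]
  exact hγ.trans (le_ciSup (im_bdd _ _ hy) γ)
end

section
/- Let ψ : ℝ → ℝ be a smooth, even, compactly supported function, and let g : ℝ → ℂ be continuous with |g(x)| ≤ C(1+x²)^{−1} for some C > 0, such that its Fourier transform ĝ(u) = ∫_ℝ g(x) e(−ux) dx is continuous and compactly supported. Define θ_ψ(x + iy) = y^{1/4} ∑_{j ∈ ℤ} ψ(j·y^{1/2}) e(j²x) for x ∈ ℝ, y > 0. Then for every α ∈ ℝ and every positive integer N: (1/N) ∑_{j ∈ ℤ} ∑_{k ∈ ℤ} ψ(j/N) ψ(k/N) ∑_{m ∈ ℤ} g(N·((j² − k²)α + m)) = (1/N) ∑_{m ∈ ℤ} ĝ(m/N) · |θ_ψ(mα + i·N^{−2})|². -/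
open MeasureTheory

/-- The Fourier transform `ĝ(u) = ∫_ℝ g(x) e(−ux) dx`. -/
noncomputable def fhat (g : ℝ → ℂ) (u : ℝ) : ℂ :=
  ∫ x : ℝ, g x * Complex.exp (-(2 * (Real.pi : ℂ) * Complex.I * (u : ℂ) * (x : ℂ)))

/-- The cutoff theta sum `θ_ψ(x+iy) = y^{1/4} ∑_{j ∈ ℤ} ψ(j·y^{1/2}) e(j²x)`. -/
noncomputable def thetaSum (ψ : ℝ → ℝ) (x y : ℝ) : ℂ :=
  ((y ^ ((1 : ℝ) / 4) : ℝ) : ℂ) *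
    ∑' j : ℤ, ((ψ ((j : ℝ) * Real.sqrt y) : ℝ) : ℂ) *
      Complex.exp (2 * (Real.pi : ℂ) * Complex.I * ((j : ℂ)) ^ 2 * (x : ℂ))

open FourierTransform in
theorem finSupp_aux {E : Type*} [Zero E] (f : ℝ → E) (hf : HasCompactSupport f) (N : ℕ)
    (hN : 1 ≤ N) : ∃ S : Finset ℤ, ∀ m : ℤ, m ∉ S → f ((m : ℝ) / (N : ℝ)) = 0 := by
  obtain ⟨R, hR⟩ := hf.isCompact.isBounded.subset_closedBall 0
  have hN0 : (0 : ℝ) < N := by exact_mod_cast hN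
  refine ⟨Finset.Icc (-⌈R * N⌉) ⌈R * N⌉, fun m hm => ?_⟩
  by_contra h
  apply hm
  have h1 := hR (subset_tsupport f h)
  rw [mem_closedBall_zero_iff, Real.norm_eq_abs, abs_div, abs_of_pos hN0, div_le_iff₀ hN0] at h1
  have h2 := h1.trans (Int.le_ceil (R * N))
  have h3 : |m| ≤ ⌈R * N⌉ := by exact_mod_cast h2
  rw [Finset.mem_Icc]
  exact abs_le.mp h3

open FourierTransform in
theorem fourier_aux (g : ℝ → ℂ) (N : ℕ) (hN : 1 ≤ N) (u : ℝ) :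
    𝓕 (fun x : ℝ => g ((N : ℝ) * x)) u = (1 / (N : ℂ)) * fhat g (u / N) := by
  have hN0 : (0 : ℝ) < N := by exact_mod_cast hN
  have hN1 : (N : ℂ) ≠ 0 := by exact_mod_cast hN0.ne'
  rw [Real.fourier_eq' ]
  have := MeasureTheory.Measure.integral_comp_mul_left
    (fun x : ℝ => g x * Complex.exp (-(2 * (Real.pi : ℂ) * Complex.I * ((u / N : ℝ) : ℂ) * (x : ℂ))))
    (N : ℝ)
  unfold fhat
  rw [abs_of_pos (inv_pos.mpr hN0), Complex.real_smul] at this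
  push_cast at this ⊢
  rw [one_div, ← this]
  congr 1
  ext v
  rw [smul_eq_mul, mul_comm]
  congr 2
  simp
  field_simp

theorem poisson_aux (g : ℝ → ℂ) (hg : Continuous g) (C : ℝ)
    (hgbd : ∀ x : ℝ, ‖g x‖ ≤ C * (1 + x ^ 2)⁻¹)
    (N : ℕ) (hN : 1 ≤ N) (S : Finset ℤ)
    (hS : ∀ m : ℤ, m ∉ S → fhat g ((m : ℝ) / (N : ℝ)) = 0) (x : ℝ) :
    ∑' m : ℤ, g ((N : ℝ) * (x + (m : ℝ))) =
      ∑ m ∈ S, (1 / (N : ℂ)) * fhat g ((m : ℝ) / N) *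
        Complex.exp (2 * (Real.pi : ℂ) * Complex.I * m * x) := by
  have hN0 : (1 : ℝ) ≤ N := by exact_mod_cast hN
  have h := Real.tsum_eq_tsum_fourier_of_rpow_decay_of_summable
    (f := fun x : ℝ => g ((N : ℝ) * x)) (by fun_prop) (b := 2) (by norm_num) ?_ ?_ x
  · rw [h, tsum_eq_sum (s := S)]
    · refine Finset.sum_congr rfl fun m _ => ?_
      rw [fourier_aux g N hN, fourier_coe_apply]
      congr 2
      push_cast
      ring
    · intro m hm
      rw [fourier_aux g N hN, hS m hm]
      simp
  · refine Asymptotics.IsBigO.of_bound C ?_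
    filter_upwards [(isCompact_singleton (x := (0:ℝ))).compl_mem_cocompact] with y hy
    have hy0 : y ≠ 0 := hy
    have hC : 0 ≤ C := by
      have := (norm_nonneg _).trans (hgbd 0)
      simpa using this
    refine (hgbd _).trans ?_
    refine mul_le_mul_of_nonneg_left ?_ hC
    rw [Real.rpow_neg (abs_nonneg _), Real.norm_of_nonneg (by positivity)]
    have h2 : |y| ^ (2:ℝ) = y ^ 2 := by
      rw [Real.rpow_two, sq_abs]
    rw [h2]
    have hy2 : 0 < y ^ 2 := by positivity
    apply inv_anti₀ hy2
    have : (1:ℝ) ≤ (N:ℝ)^2 := one_le_pow₀ hN0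
    nlinarith
  · refine summable_of_ne_finset_zero (s := S) fun m hm => ?_
    rw [fourier_aux g N hN, hS m hm]
    simp

theorem theta_aux (ψ : ℝ → ℝ) (N : ℕ) (hN : 1 ≤ N) (J : Finset ℤ)
    (hJ : ∀ m : ℤ, m ∉ J → ψ ((m : ℝ) / (N : ℝ)) = 0) (x : ℝ) :
    ((‖thetaSum ψ x (1 / (N : ℝ) ^ 2)‖ ^ 2 : ℝ) : ℂ) =
      (1 / (N : ℂ)) * ∑ j ∈ J, ∑ k ∈ J,
        ((ψ ((j : ℝ) / (N : ℝ)) * ψ ((k : ℝ) / (N : ℝ)) : ℝ) : ℂ) *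
        Complex.exp (2 * (Real.pi : ℂ) * Complex.I * ((j : ℂ) ^ 2 - (k : ℂ) ^ 2) * x) := by
  have hN0 : (0 : ℝ) < N := by exact_mod_cast hN
  have hs : Real.sqrt (1 / (N : ℝ) ^ 2) = 1 / N := by
    rw [Real.sqrt_eq_iff_mul_self_eq (by positivity) (by positivity)]
    ring
  have hp : ((1 / (N : ℝ) ^ 2) ^ ((1 : ℝ) / 4)) * ((1 / (N : ℝ) ^ 2) ^ ((1 : ℝ) / 4)) = 1 / N := by
    rw [← Real.rpow_add (by positivity), ← hs, Real.sqrt_eq_rpow]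
    norm_num
  have hθ : thetaSum ψ x (1 / (N : ℝ) ^ 2) = (((1 / (N : ℝ) ^ 2) ^ ((1 : ℝ) / 4) : ℝ) : ℂ) *
      ∑ j ∈ J, ((ψ ((j : ℝ) / N) : ℝ) : ℂ) *
      Complex.exp (2 * (Real.pi : ℂ) * Complex.I * ((j : ℂ)) ^ 2 * (x : ℂ)) := by
    unfold thetaSum
    rw [hs, tsum_eq_sum (s := J)]
    · simp only [mul_one_div]
    · intro m hm
      rw [mul_one_div, hJ m hm]
      simp
  have hc : ((1 / (N : ℂ))) = ((1 / (N : ℝ) : ℝ) : ℂ) := by push_cast; rfl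
  rw [Complex.ofReal_pow, ← Complex.mul_conj', hθ, hc, ← hp, map_mul, Complex.conj_ofReal,
    mul_mul_mul_comm, Complex.ofReal_mul, map_sum, Finset.sum_mul_sum]
  congr 1
  refine Finset.sum_congr rfl fun j _ => Finset.sum_congr rfl fun k _ => ?_
  rw [map_mul, Complex.conj_ofReal, ← Complex.exp_conj, mul_mul_mul_comm, ← Complex.exp_add,
    Complex.ofReal_mul]
  congr 2
  have h2 : (starRingEnd ℂ) 2 = 2 := Complex.conj_ofNat 2
  simp [h2]
  ring

/-- the Poisson-summation identity expressing the smoothed pair correlation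
function of `n²α` mod 1 as an average of `|θ_ψ|²` along the points `mα + iN^{−2}`. -/
theorem stmt_15 (ψ : ℝ → ℝ) (hψ : ContDiff ℝ (⊤ : ℕ∞) ψ) (heven : ∀ x : ℝ, ψ (-x) = ψ x)
    (hψsupp : HasCompactSupport ψ)
    (g : ℝ → ℂ) (hg : Continuous g) (C : ℝ) (hC : 0 < C)
    (hgbd : ∀ x : ℝ, ‖g x‖ ≤ C * (1 + x ^ 2)⁻¹)
    (hfhatcont : Continuous (fhat g)) (hfhatsupp : HasCompactSupport (fhat g))
    (α : ℝ) (N : ℕ) (hN : 1 ≤ N) :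
    (1 / (N : ℂ)) * ∑' j : ℤ, ∑' k : ℤ,
        ((ψ ((j : ℝ) / (N : ℝ)) * ψ ((k : ℝ) / (N : ℝ)) : ℝ) : ℂ) *
          ∑' m : ℤ, g ((N : ℝ) * (((j : ℝ) ^ 2 - (k : ℝ) ^ 2) * α + (m : ℝ)))
      = (1 / (N : ℂ)) * ∑' m : ℤ,
          fhat g ((m : ℝ) / (N : ℝ)) *
            ((‖thetaSum ψ ((m : ℝ) * α) (1 / (N : ℝ) ^ 2)‖ ^ 2 : ℝ) : ℂ) := by
  obtain ⟨J, hJ⟩ := finSupp_aux ψ hψsupp N hN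
  obtain ⟨S, hS⟩ := finSupp_aux (fhat g) hfhatsupp N hN
  congr 1
  rw [tsum_eq_sum (s := J) (fun j hj => by simp [hJ j hj]),
    tsum_eq_sum (s := S) (fun m hm => by rw [hS m hm, zero_mul])]
  have hR : ∀ j ∈ J, (∑' k : ℤ,
        ((ψ ((j : ℝ) / (N : ℝ)) * ψ ((k : ℝ) / (N : ℝ)) : ℝ) : ℂ) *
          ∑' m : ℤ, g ((N : ℝ) * (((j : ℝ) ^ 2 - (k : ℝ) ^ 2) * α + (m : ℝ)))) =
      ∑ k ∈ J, ∑ m ∈ S, ((ψ ((j : ℝ) / (N : ℝ)) * ψ ((k : ℝ) / (N : ℝ)) : ℝ) : ℂ) *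
          ((1 / (N : ℂ)) * fhat g ((m : ℝ) / N) *
        Complex.exp (2 * (Real.pi : ℂ) * Complex.I * m *
          ((((j : ℝ) ^ 2 - (k : ℝ) ^ 2) * α : ℝ) : ℂ))) := by
    intro j _
    rw [tsum_eq_sum (s := J) (fun k hk => by simp [hJ k hk])]
    refine Finset.sum_congr rfl fun k _ => ?_
    rw [poisson_aux g hg C hgbd N hN S hS, Finset.mul_sum]
  rw [Finset.sum_congr rfl hR]
  simp_rw [theta_aux ψ N hN J hJ, Finset.mul_sum]
  rw [Finset.sum_congr rfl fun j _ => Finset.sum_comm, Finset.sum_comm]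
  refine Finset.sum_congr rfl fun m _ => Finset.sum_congr rfl fun j _ =>
    Finset.sum_congr rfl fun k _ => ?_
  have : 2 * (Real.pi : ℂ) * Complex.I * m * ((((j : ℝ) ^ 2 - (k : ℝ) ^ 2) * α : ℝ) : ℂ) =
      2 * (Real.pi : ℂ) * Complex.I * ((j : ℂ) ^ 2 - (k : ℂ) ^ 2) * (((m : ℝ) * α : ℝ) : ℂ) := by
    push_cast
    ring
  rw [this]
  ring
end

section
/- Let A be a nonnegative integer and let f : ℍ → ℂ be infinitely differentiable (as a function of the two real coordinates x = Re z, y = Im z), satisfying f(γ·z) = f(z) for all γ ∈ SL(2,ℤ) and z ∈ ℍ, and suppose there exists Y > 0 such that f(z) = 0 whenever 𝒴(z) > Y. Then there exists a constant C > 0 such that |(∂^A/∂x^A) f(x + iy)| ≤ C·y^{−A} for all x ∈ ℝ and all y > 0. -/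
open scoped MatrixGroups UpperHalfPlane

/-- Möbius action of `γ ∈ SL(2,ℤ)` on a complex number. -/
noncomputable def moebC (γ : SL(2, ℤ)) (z : ℂ) : ℂ :=
  (((γ 0 0 : ℤ) : ℂ) * z + ((γ 0 1 : ℤ) : ℂ)) / (((γ 1 0 : ℤ) : ℂ) * z + ((γ 1 1 : ℤ) : ℂ))

/-- The invariant height `𝒴(z) = sup_{γ ∈ SL(2,ℤ)} Im(γ·z)` (zero if `Im z ≤ 0`). -/
noncomputable def invHeightC (z : ℂ) : ℝ :=
  if h : 0 < z.im then ⨆ γ : SL(2, ℤ), (γ • UpperHalfPlane.mk z h).im else 0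

/-- Iterated directional derivative. -/
noncomputable def dirIter {E : Type*} [NormedAddCommGroup E] [NormedSpace ℝ E]
    (F : E → ℂ) (b : E) : ℕ → E → ℂ
  | 0 => F
  | n + 1 => fun p => fderiv ℝ (dirIter F b n) p b

lemma dirIter_contDiffOn {E : Type*} [NormedAddCommGroup E] [NormedSpace ℝ E]
    (F : E → ℂ) (b : E) {U : Set E} (hU : IsOpen U) (hF : ContDiffOn ℝ (⊤ : ℕ∞) F U) (n : ℕ) :
    ContDiffOn ℝ (⊤ : ℕ∞) (dirIter F b n) U := by
  induction n with
  | zero => exact hF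
  | succ n ih =>
    have h := ih.fderiv_of_isOpen (m := ((⊤ : ℕ∞) : WithTop ℕ∞)) hU (by simp)
    exact h.clm_apply contDiffOn_const

lemma iteratedDeriv_line {E : Type*} [NormedAddCommGroup E] [NormedSpace ℝ E]
    (F : E → ℂ) (a b : E) (k l : ℝ) {U : Set E} (hU : IsOpen U)
    (hF : ContDiffOn ℝ (⊤ : ℕ∞) F U) (n : ℕ) :
    ∀ t : ℝ, a + (k * t + l) • b ∈ U →
      iteratedDeriv n (fun t : ℝ => F (a + (k * t + l) • b)) t
        = (k : ℂ) ^ n * dirIter F b n (a + (k * t + l) • b) := by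
  induction n with
  | zero => intro t _; simp [dirIter]
  | succ n ih =>
    intro t ht
    rw [iteratedDeriv_succ]
    have hline : ∀ t : ℝ, HasDerivAt (fun t : ℝ => a + (k * t + l) • b) (k • b) t := by
      intro t
      have h1 : HasDerivAt (fun t : ℝ => k * t + l) k t := by
        simpa using ((hasDerivAt_id t).const_mul k).add_const l
      simpa using (h1.smul_const b).const_add a
    have hcont : ContinuousAt (fun t : ℝ => a + (k * t + l) • b) t := (hline t).continuousAt
    have hev : iteratedDeriv n (fun t : ℝ => F (a + (k * t + l) • b)) =ᶠ[nhds t]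
        fun t => (k : ℂ) ^ n * dirIter F b n (a + (k * t + l) • b) := by
      filter_upwards [hcont.preimage_mem_nhds (hU.mem_nhds ht)] with s hs
      exact ih s hs
    rw [hev.deriv_eq]
    have hd : DifferentiableAt ℝ (dirIter F b n) (a + (k * t + l) • b) :=
      ((dirIter_contDiffOn F b hU hF n).contDiffAt (hU.mem_nhds ht)).differentiableAt (by simp)
    have h2 := (hd.hasFDerivAt.comp_hasDerivAt t (hline t)).const_mul ((k : ℂ) ^ n)
    have h3 := h2.deriv
    simp only [Function.comp_def] at h3
    rw [h3]
    simp only [dirIter, map_smul, Complex.real_smul]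
    ring

/-- The conjugated horocycle. -/
noncomputable def horo (p : ℂ × ℂ × ℝ) : ℂ :=
  p.1 + (p.1.im : ℂ) * p.2.1 ^ 2 * (p.2.2 : ℂ) / (1 - (p.2.1.im : ℂ) * p.2.1 * (p.2.2 : ℂ))

def horoV : Set (ℂ × ℂ × ℝ) := {p | 1 - (p.2.1.im : ℂ) * p.2.1 * (p.2.2 : ℂ) ≠ 0}

lemma imC_contDiff {E : Type*} [NormedAddCommGroup E] [NormedSpace ℝ E] {g : E → ℂ}
    (hg : ContDiff ℝ (⊤ : ℕ∞) g) : ContDiff ℝ (⊤ : ℕ∞) (fun p => ((g p).im : ℂ)) :=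
  (Complex.ofRealCLM.contDiff.comp Complex.imCLM.contDiff).comp hg

lemma horo_den_contDiff : ContDiff ℝ (⊤ : ℕ∞)
    (fun p : ℂ × ℂ × ℝ => 1 - (p.2.1.im : ℂ) * p.2.1 * (p.2.2 : ℂ)) := by
  have h1 : ContDiff ℝ (⊤ : ℕ∞) (fun p : ℂ × ℂ × ℝ => p.2.1) := by fun_prop
  have h2 : ContDiff ℝ (⊤ : ℕ∞) (fun p : ℂ × ℂ × ℝ => (p.2.2 : ℂ)) :=
    Complex.ofRealCLM.contDiff.comp (contDiff_snd.comp contDiff_snd)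
  exact contDiff_const.sub (((imC_contDiff h1).mul h1).mul h2)

lemma horoV_open : IsOpen horoV :=
  isOpen_ne_fun horo_den_contDiff.continuous continuous_const

lemma horo_contDiffOn : ContDiffOn ℝ (⊤ : ℕ∞) horo horoV := by
  have h0 : ContDiff ℝ (⊤ : ℕ∞) (fun p : ℂ × ℂ × ℝ => p.1) := by fun_prop
  have h1 : ContDiff ℝ (⊤ : ℕ∞) (fun p : ℂ × ℂ × ℝ => p.2.1) := by fun_prop
  have h2 : ContDiff ℝ (⊤ : ℕ∞) (fun p : ℂ × ℂ × ℝ => (p.2.2 : ℂ)) :=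
    Complex.ofRealCLM.contDiff.comp (contDiff_snd.comp contDiff_snd)
  have h3 : ContDiff ℝ (⊤ : ℕ∞)
      (fun p : ℂ × ℂ × ℝ => (p.1.im : ℂ) * p.2.1 ^ 2 * (p.2.2 : ℂ)) :=
    ((imC_contDiff h0).mul (h1.pow 2)).mul h2
  intro p hp
  have h4 := h3.contDiffAt (x := p) |>.mul ((horo_den_contDiff.contDiffAt (x := p)).inv hp)
  exact (h0.contDiffAt.add h4).contDiffWithinAt

def horoU : Set (ℂ × ℂ × ℝ) := horoV ∩ horo ⁻¹' {z : ℂ | 0 < z.im}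

lemma upper_open : IsOpen {z : ℂ | 0 < z.im} := isOpen_lt continuous_const Complex.continuous_im

lemma horoU_open : IsOpen horoU :=
  horo_contDiffOn.continuousOn.isOpen_inter_preimage horoV_open upper_open

/-- Key identity. -/
lemma key_identity (a b c d x y t : ℝ) (hy : 0 < y) (hdet : a * d - b * c = 1)
    (hj : ∀ t : ℝ, (c : ℂ) * (⟨t, y⟩ : ℂ) + d ≠ 0) (w j e : ℂ)
    (hjd : j = (c : ℂ) * (⟨x, y⟩ : ℂ) + d)
    (hw : w = ((a : ℂ) * (⟨x, y⟩ : ℂ) + b) / j)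
    (he : e = ‖j‖ / j) (hwim : w.im = y / ‖j‖ ^ 2) :
    ((a : ℂ) * (⟨t, y⟩ : ℂ) + b) / ((c : ℂ) * (⟨t, y⟩ : ℂ) + d)
      = horo (w, e, y⁻¹ * t + (-(y⁻¹ * x))) := by
  have hj0 : j ≠ 0 := hjd ▸ hj x
  have hn : (‖j‖ : ℂ) ≠ 0 := by simpa using hj0
  have hn' : ‖j‖ ≠ 0 := by simpa using hj0
  have hyC : (y : ℂ) ≠ 0 := by exact_mod_cast hy.ne'
  have hjim : j.im = c * y := by rw [hjd]; simp
  have heim : e.im = -(c * y) / ‖j‖ := by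
    rw [he, Complex.div_im, Complex.normSq_eq_norm_sq, hjim]
    simp
    field_simp
  have ht : (⟨t, y⟩ : ℂ) = (⟨x, y⟩ : ℂ) + ((t : ℂ) - x) := by
    apply Complex.ext <;> simp
  have hjt := hj t
  have hdetC : (a : ℂ) * d - b * c = 1 := by exact_mod_cast hdet
  unfold horo
  simp only [hwim, heim]
  rw [he, hw]
  have hden : (1 : ℂ) - ((-(c * y) / ‖j‖ : ℝ) : ℂ) * (‖j‖ / j) * ((y⁻¹ * t + (-(y⁻¹ * x)) : ℝ) : ℂ)
      = ((c : ℂ) * (⟨t, y⟩ : ℂ) + d) / j := by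
    rw [ht, hjd] at *
    push_cast
    field_simp
    ring
  rw [hden]
  generalize hz : (⟨x, y⟩ : ℂ) = z at *
  rw [ht] at hjt ⊢
  push_cast
  have e1 : (c : ℂ) * (z + (t - x)) + d = j + c * (t - x) := by rw [hjd]; ring
  rw [e1] at hjt ⊢
  have e2 : (y : ℂ)⁻¹ * t + -((y : ℂ)⁻¹ * x) = (y : ℂ)⁻¹ * ((t : ℂ) - x) := by ring
  rw [e2]
  generalize (t : ℂ) - x = q at *
  generalize hm : j + c * q = m at *
  field_simp
  rw [← hm, hjd]
  linear_combination q * hdetC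

/-- For a smooth `SL(2,ℤ)`-invariant function `f` on the upper half-plane,
vanishing wherever `𝒴(z) > Y`, the `A`-th `x`-derivative satisfies
`|(∂^A/∂x^A) f(x+iy)| ≤ C·y^{−A}`. -/
theorem stmt_17 (A : ℕ) (f : ℂ → ℂ)
    (hsmooth : ContDiffOn ℝ (⊤ : ℕ∞) f {z : ℂ | 0 < z.im})
    (hinv : ∀ γ : SL(2, ℤ), ∀ z : ℂ, 0 < z.im → f (moebC γ z) = f z)
    (Y : ℝ) (hY : 0 < Y)
    (hvanish : ∀ z : ℂ, 0 < z.im → Y < invHeightC z → f z = 0) :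
    ∃ C : ℝ, 0 < C ∧ ∀ x y : ℝ, 0 < y →
      ‖iteratedDeriv A (fun t : ℝ => f ⟨t, y⟩) x‖ ≤ C / y ^ A := by
  set F : ℂ × ℂ × ℝ → ℂ := fun p => f (horo p) with hFdef
  have hF : ContDiffOn ℝ (⊤ : ℕ∞) F horoU :=
    hsmooth.comp (horo_contDiffOn.mono Set.inter_subset_left) (fun p hp => hp.2)
  set b : ℂ × ℂ × ℝ := (0, 0, 1) with hb
  set K : Set (ℂ × ℂ × ℝ) :=
    (Set.Icc (-(1/2) : ℝ) (1/2) ×ℂ Set.Icc (1/2 : ℝ) Y) ×ˢ (Metric.sphere (0:ℂ) 1 ×ˢ {(0:ℝ)}) with hK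
  have hKc : IsCompact K :=
    (isCompact_Icc.reProdIm isCompact_Icc).prod ((isCompact_sphere _ _).prod isCompact_singleton)
  have hKU : K ⊆ horoU := by
    rintro ⟨w, e, s⟩ ⟨h1, h2, h3⟩
    simp only [Set.mem_singleton_iff] at h3
    subst h3
    have h4 : (1/2 : ℝ) ≤ w.im := h1.2.1
    refine ⟨by simp [horoV], ?_⟩
    simp [horo]; linarith
  obtain ⟨C, hC⟩ := hKc.exists_bound_of_continuousOn
    ((dirIter_contDiffOn F b horoU_open hF A).continuousOn.mono hKU)
  refine ⟨max C 1, by positivity, ?_⟩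
  intro x y hy
  set z : ℍ := UpperHalfPlane.mk ⟨x, y⟩ hy with hz
  obtain ⟨γ, hγ⟩ := ModularGroup.exists_smul_mem_fd z
  -- coe of the action
  have hcoe : ∀ (t : ℝ) , ((γ • (UpperHalfPlane.mk ⟨t, y⟩ hy) : ℍ) : ℂ) = moebC γ ⟨t, y⟩ := by
    intro t
    rw [UpperHalfPlane.coe_specialLinearGroup_apply]
    simp [moebC]
  have hjne : ∀ t : ℝ, ((γ 1 0 : ℤ) : ℂ) * (⟨t, y⟩ : ℂ) + ((γ 1 1 : ℤ) : ℂ) ≠ 0 := by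
    intro t
    have := UpperHalfPlane.denom_ne_zero (γ : GL (Fin 2) ℝ) (UpperHalfPlane.mk ⟨t, y⟩ hy)
    simpa [UpperHalfPlane.denom] using this
  by_cases hYw : Y < (γ • z).im
  · -- locally zero
    have hc : ContinuousAt (fun t : ℝ => (moebC γ ⟨t, y⟩).im) x := by
      have hm : Continuous (fun t : ℝ => (⟨t, y⟩ : ℂ)) := by
        have : (fun t : ℝ => (⟨t, y⟩ : ℂ)) = fun t : ℝ => (t : ℂ) + y * Complex.I := by
          funext t; apply Complex.ext <;> simp
        rw [this]; fun_prop
      apply Complex.continuous_im.continuousAt.comp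
      unfold moebC
      exact ContinuousAt.div (by fun_prop) (by fun_prop) (hjne x)
    have hx : Y < (moebC γ ⟨x, y⟩).im := by
      rw [← hcoe x]; exact hYw
    have hev : (fun t : ℝ => f ⟨t, y⟩) =ᶠ[nhds x] fun _ => (0 : ℂ) := by
      filter_upwards [hc.eventually (lt_mem_nhds hx)] with t ht
      apply hvanish _ hy
      have : invHeightC ⟨t, y⟩ = ⨆ γ : SL(2, ℤ), (γ • UpperHalfPlane.mk ⟨t, y⟩ hy).im := by
        unfold invHeightC
        rw [dif_pos hy]
      rw [this]
      refine lt_of_lt_of_le ht ?_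
      rw [← hcoe t]
      obtain ⟨g, hg⟩ := ModularGroup.exists_max_im (UpperHalfPlane.mk ⟨t, y⟩ hy)
      exact le_ciSup (f := fun γ : SL(2, ℤ) => (γ • UpperHalfPlane.mk ⟨t, y⟩ hy).im)
        ⟨_, by rintro _ ⟨g', rfl⟩; exact hg g'⟩ γ
    rw [hev.iteratedDeriv_eq]
    simp only [iteratedDeriv_const]
    split_ifs <;> simp <;> positivity
  · push Not at hYw
    set j : ℂ := ((γ 1 0 : ℤ) : ℂ) * (⟨x, y⟩ : ℂ) + ((γ 1 1 : ℤ) : ℂ) with hjdef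
    have hj0 : j ≠ 0 := hjne x
    set w : ℂ := moebC γ ⟨x, y⟩ with hw
    have hwim' : w.im = (γ • z).im := by rw [hw, ← hcoe x]; rfl
    have hwre' : w.re = (γ • z).re := by rw [hw, ← hcoe x]; rfl
    have hwim : w.im = y / ‖j‖ ^ 2 := by
      rw [hwim', ModularGroup.im_smul_eq_div_normSq, Complex.normSq_eq_norm_sq]
      simp [UpperHalfPlane.denom, hjdef, hz, UpperHalfPlane.im]
    have hdet : ((γ 0 0 : ℤ) : ℝ) * ((γ 1 1 : ℤ) : ℝ) - ((γ 0 1 : ℤ) : ℝ) * ((γ 1 0 : ℤ) : ℝ) = 1 := by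
      have := γ.det_coe
      rw [Matrix.det_fin_two] at this
      exact_mod_cast this
    have hfun : (fun t : ℝ => f ⟨t, y⟩) =
        fun t : ℝ => F ((w, (‖j‖ / j : ℂ), (0:ℝ)) + (y⁻¹ * t + (-(y⁻¹ * x))) • b) := by
      funext t
      rw [← hinv γ ⟨t, y⟩ hy]
      have := key_identity (γ 0 0 : ℤ) (γ 0 1 : ℤ) (γ 1 0 : ℤ) (γ 1 1 : ℤ) x y t hy hdet
        (by simpa using hjne) w j (‖j‖ / j) (by simp [hjdef]) (by simp [hw, moebC, hjdef]) rfl hwim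
      simp only [hFdef, hb, Prod.smul_mk, smul_zero, Prod.mk_add_mk, add_zero, zero_add,
        smul_eq_mul, mul_one]
      rw [← this]
      simp [moebC]
    have hpt : ((w, (‖j‖ / j : ℂ), (0:ℝ)) + (y⁻¹ * x + (-(y⁻¹ * x))) • b)
        = (w, (‖j‖ / j : ℂ), (0:ℝ)) := by simp
    have hmem : ((w, (‖j‖ / j : ℂ), (0:ℝ)) : ℂ × ℂ × ℝ) ∈ K := by
      refine ⟨⟨?_, ?_⟩, ?_, rfl⟩
      · have := abs_le.1 hγ.2
        show w.re ∈ Set.Icc (-(1/2) : ℝ) (1/2)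
        rw [hwre']
        exact ⟨by linarith [this.1], by linarith [this.2]⟩
      · show w.im ∈ Set.Icc (1/2 : ℝ) Y
        rw [hwim']
        refine ⟨?_, hYw⟩
        have := ModularGroup.three_le_four_mul_im_sq_of_mem_fd hγ
        have := (γ • z).im_pos
        nlinarith
      · simp [hj0]
    rw [hfun, iteratedDeriv_line F _ b _ _ horoU_open hF A x (by rw [hpt]; exact hKU hmem), hpt,
      norm_mul, norm_pow, Complex.norm_real, Real.norm_of_nonneg (by positivity), inv_pow,
      div_eq_inv_mul (max C 1)]
    exact mul_le_mul_of_nonneg_left ((hC _ hmem).trans (le_max_left _ _)) (by positivity)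
end
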